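/- arXiv:1804.04319 — 3 statements merged into one kernel-verified Lean document; each statement's English description precedes it below -/
import Mathlib

section
/- Fix t ≥ 1. There exist positive real constants C and c such that for every N ∈ L_t^+, the group ε(N) := {γ ∈ GL_t(ℤ) : γNγᵀ = N} is finite and its cardinality satisfies |ε(N)| ≤ C·det(N)^{c}. -/
open Matrix

/-- A real matrix has integer entries. -/
def IsIntegerMatrix {ι κ : Type*} (A : Matrix ι κ ℝ) : Prop :=
  ∀ i j, ∃ z : ℤ, A i j = z

/-- A real square matrix is half-integral: integer diagonal and its double integral. -/
def IsHalfIntegral {ι : Type*} (A : Matrix ι ι ℝ) : Prop :=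
  (∀ i, ∃ z : ℤ, A i i = z) ∧ ∀ i j, ∃ z : ℤ, 2 * A i j = z

/-- Membership in `L_t^+`: positive definite half-integral symmetric real matrices. -/
def LPlus {ι : Type*} [Fintype ι] (A : Matrix ι ι ℝ) : Prop :=
  A.IsSymm ∧ A.PosDef ∧ IsHalfIntegral A

/-- The automorphism group `ε(N) = {γ ∈ GL_t(ℤ) : γNγᵀ = N}` of `N`. -/
def unitGroup (t : ℕ) (N : Matrix (Fin t) (Fin t) ℝ) : Set (Matrix (Fin t) (Fin t) ℝ) :=
  {γ | IsIntegerMatrix γ ∧ (γ.det = 1 ∨ γ.det = -1) ∧ γ * N * γᵀ = N}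

/-!
Two elements of `ε(N)` that agree modulo `m ≥ 3` are equal, so `ε(N)` embeds into `GL_t(ℤ/m)`, whose
order does not depend on `N`. Indeed let `g = 1 + mA ∈ ε(N)` with `A` integral. Since `ε(N)` is
bounded, so are the powers of `g`, whence `‖Aᵏ‖ = ‖(g - 1)ᵏ‖ / mᵏ = O((2 / m)ᵏ)`. An integral matrix
whose powers tend to zero is nilpotent, so `g` is unipotent, and a unipotent element with bounded
powers is `1`. Finally `1 ≤ det (2N) = 2ᵗ det N`, because `2N` is integral and positive definite.
-/

open Filter Topology

theorem pow_mul_one_add_pow_of_pow_eq_zero {R : Type*} [Semiring R] {x : R} {k : ℕ}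
    (hx : x ^ (k + 2) = 0) (n : ℕ) : x ^ k * (1 + x) ^ n = x ^ k + n • x ^ (k + 1) := by
  induction n with
  | zero => simp
  | succ n ih =>
    rw [pow_succ (1 + x), ← mul_assoc, ih, mul_add, mul_one, add_mul, smul_mul_assoc, ← pow_succ,
      ← pow_succ, hx, smul_zero, add_zero, succ_nsmul, add_assoc]

section PowerBounded

variable {R : Type*} [NormedRing R] {g : R} {C : ℝ}

theorem norm_pow_mul_sub_one_pow_le (hC : ∀ k, ‖g ^ k‖ ≤ C) (j k : ℕ) :
    ‖g ^ j * (g - 1) ^ k‖ ≤ 2 ^ k * C := by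
  induction k generalizing j with
  | zero => simpa using hC j
  | succ k ih =>
    calc ‖g ^ j * (g - 1) ^ (k + 1)‖ = ‖g ^ (j + 1) * (g - 1) ^ k - g ^ j * (g - 1) ^ k‖ := by
          rw [pow_succ' (g - 1), pow_succ g]
          noncomm_ring
      _ ≤ ‖g ^ (j + 1) * (g - 1) ^ k‖ + ‖g ^ j * (g - 1) ^ k‖ := norm_sub_le _ _
      _ ≤ 2 ^ k * C + 2 ^ k * C := add_le_add (ih _) (ih _)
      _ = 2 ^ (k + 1) * C := by ring

variable [NormedAlgebra ℝ R]

theorem tendsto_pow_nhds_zero_of_sub_one_eq_smul {a : R} {r : ℝ} (hr : 2 < r)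
    (hg : g - 1 = r • a) (hC : ∀ k, ‖g ^ k‖ ≤ C) : Tendsto (a ^ ·) atTop (𝓝 0) := by
  have hr₀ : 0 < r := two_pos.trans hr
  have hbound (k : ℕ) : ‖a ^ k‖ ≤ (2 / r) ^ k * C := by
    have h := norm_pow_mul_sub_one_pow_le hC 0 k
    rw [pow_zero, one_mul, hg, smul_pow, norm_smul, norm_pow, Real.norm_of_nonneg hr₀.le] at h
    rw [div_pow, div_mul_eq_mul_div, le_div_iff₀' (pow_pos hr₀ k)]
    exact h
  have hgeom : Tendsto (fun k : ℕ => (2 / r) ^ k * C) atTop (𝓝 0) := by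
    simpa using (tendsto_pow_atTop_nhds_zero_of_lt_one (by positivity)
      ((div_lt_one hr₀).mpr hr)).mul_const C
  exact squeeze_zero_norm hbound hgeom

theorem eq_one_of_isNilpotent_sub_one_of_norm_pow_le (hg : IsNilpotent (g - 1))
    (hC : ∀ k, ‖g ^ k‖ ≤ C) : g = 1 := by
  set x := g - 1
  have hgx : 1 + x = g := add_sub_cancel 1 g
  have hdescend (k : ℕ) (hk : x ^ (k + 2) = 0) : x ^ (k + 1) = 0 := by
    have hlinear (n : ℕ) : n * ‖x ^ (k + 1)‖ ≤ ‖x ^ k‖ * C + ‖x ^ k‖ := by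
      calc n * ‖x ^ (k + 1)‖ = ‖x ^ k * g ^ n - x ^ k‖ := by
            rw [← hgx, pow_mul_one_add_pow_of_pow_eq_zero hk, add_sub_cancel_left,
              ← Nat.cast_smul_eq_nsmul ℝ, norm_smul, RCLike.norm_natCast]
        _ ≤ ‖x ^ k * g ^ n‖ + ‖x ^ k‖ := norm_sub_le _ _
        _ ≤ ‖x ^ k‖ * C + ‖x ^ k‖ := by
            gcongr
            exact norm_mul_le_of_le le_rfl (hC n)
    by_contra hne
    obtain ⟨n, hn⟩ := exists_nat_gt ((‖x ^ k‖ * C + ‖x ^ k‖) / ‖x ^ (k + 1)‖)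
    exact ((div_lt_iff₀ (norm_pos_iff.mpr hne)).mp hn).not_ge (hlinear n)
  have hzero (k : ℕ) (hk : x ^ (k + 1) = 0) : x = 0 := by
    induction k with
    | zero => simpa using hk
    | succ k ih => exact ih (hdescend k hk)
  obtain ⟨k, hk⟩ := hg
  exact sub_eq_zero.mp (hzero k (pow_eq_zero_of_le k.le_succ hk))

end PowerBounded

theorem norm_le_of_conj_mul_star_eq {R : Type*} [NormedRing R] [StarRing R] [CStarRing R]
    {b : Rˣ} {g : R} (hg : g * (b * star (b : R)) * star g = b * star (b : R)) :
    ‖g‖ ≤ ‖(b : R)‖ * ‖(↑b⁻¹ : R)‖ := by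
  have hgb : ‖g * b‖ = ‖(b : R)‖ := by
    rw [← mul_self_inj (norm_nonneg _) (norm_nonneg _), ← CStarRing.norm_self_mul_star,
      ← CStarRing.norm_self_mul_star, star_mul, ← hg]
    simp only [mul_assoc]
  calc ‖g‖ = ‖g * b * ↑b⁻¹‖ := by rw [Units.mul_inv_cancel_right]
    _ ≤ ‖g * b‖ * ‖(↑b⁻¹ : R)‖ := norm_mul_le _ _
    _ = ‖(b : R)‖ * ‖(↑b⁻¹ : R)‖ := by rw [hgb]

section IntegerMatrices

theorem eventually_eq_zero_of_tendsto_map_intCast {α ι κ : Type*} [Finite ι] [Finite κ]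
    {l : Filter α} {A : α → Matrix ι κ ℤ} (h : Tendsto (fun a => (A a).map ((↑) : ℤ → ℝ)) l (𝓝 0)) :
    ∀ᶠ a in l, A a = 0 := by
  have hemb : IsEmbedding fun B : Matrix ι κ ℤ => B.map ((↑) : ℤ → ℝ) :=
    Int.isClosedEmbedding_coe_real.isEmbedding.matrix_map
  have hA : Tendsto A l (𝓝 0) := by
    rw [hemb.tendsto_nhds_iff, Matrix.map_zero _ Int.cast_zero]
    exact h
  have : DiscreteTopology (Matrix ι κ ℤ) := inferInstanceAs (DiscreteTopology (ι → κ → ℤ))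
  rwa [nhds_discrete, tendsto_pure] at hA

theorem exists_eq_smul_of_map_intCast_zmod_eq_zero {ι κ : Type*} {m : ℕ} {B : Matrix ι κ ℤ}
    (hB : B.map ((↑) : ℤ → ZMod m) = 0) : ∃ A : Matrix ι κ ℤ, B = m • A := by
  have hdvd (i : ι) (j : κ) : (m : ℤ) ∣ B i j :=
    (ZMod.intCast_zmod_eq_zero_iff_dvd _ m).mp (congrFun₂ hB i j)
  choose A hA using hdvd
  exact ⟨Matrix.of A, by ext i j; simp [hA]⟩

open scoped Matrix.Norms.L2Operator

variable {n : Type*} [Fintype n] [DecidableEq n]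

/-- Minkowski's lemma, with finite order of `g` weakened to boundedness of its powers. -/
theorem eq_one_of_map_zmod_eq_one_of_norm_pow_le {m : ℕ} (hm : 3 ≤ m) {g : Matrix n n ℤ}
    (hg : (Int.castRingHom (ZMod m)).mapMatrix g = 1) {C : ℝ}
    (hC : ∀ k, ‖(Int.castRingHom ℝ).mapMatrix g ^ k‖ ≤ C) : g = 1 := by
  set φ := (Int.castRingHom ℝ).mapMatrix (m := n)
  obtain ⟨A, hA⟩ : ∃ A, g - 1 = m • A := by
    apply exists_eq_smul_of_map_intCast_zmod_eq_zero
    change (Int.castRingHom (ZMod m)).mapMatrix (g - 1) = 0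
    rw [map_sub, hg, map_one, sub_self]
  have hφA : φ g - 1 = (m : ℝ) • φ A := by
    rw [Nat.cast_smul_eq_nsmul, ← map_nsmul, ← hA, map_sub, map_one]
  have hlim : Tendsto (fun k => φ (A ^ k)) atTop (𝓝 0) := by
    simpa only [map_pow] using
      tendsto_pow_nhds_zero_of_sub_one_eq_smul (by exact_mod_cast hm) hφA hC
  have hnil : IsNilpotent (φ g - 1) := by
    obtain ⟨k, hk⟩ := (eventually_eq_zero_of_tendsto_map_intCast hlim).exists
    rw [hφA]
    exact (IsNilpotent.map ⟨k, hk⟩ φ).smul _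
  have hφg : φ g = φ 1 := by rw [eq_one_of_isNilpotent_sub_one_of_norm_pow_le hnil hC, map_one]
  exact Matrix.map_injective Int.cast_injective hφg

end IntegerMatrices

section IntegralAutGroup

variable {n : Type*} [Fintype n] [DecidableEq n]

/-- The automorphism group `ε(N)` as a subgroup of `GL n ℤ`, so that reduction modulo `m` is a group
homomorphism on it; `unitGroup t N` is its image in the real matrices. -/
def integralAutGroup (N : Matrix n n ℝ) : Subgroup (GL n ℤ) where
  carrier := {g | (Int.castRingHom ℝ).mapMatrix g * N * ((Int.castRingHom ℝ).mapMatrix g)ᵀ = N}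
  one_mem' := by simp
  mul_mem' {g h} hg hh := by
    set φ := (Int.castRingHom ℝ).mapMatrix (m := n)
    calc φ (g * h) * N * (φ (g * h))ᵀ = φ g * (φ h * N * (φ h)ᵀ) * (φ g)ᵀ := by
          simp only [map_mul, transpose_mul, Matrix.mul_assoc]
      _ = φ g * N * (φ g)ᵀ := by rw [hh]
      _ = N := hg
  inv_mem' {g} hg := by
    set φ := (Int.castRingHom ℝ).mapMatrix (m := n)
    have hinv : φ ↑g⁻¹ * φ g = 1 := by rw [← map_mul, Units.inv_mul, map_one]
    calc φ ↑g⁻¹ * N * (φ ↑g⁻¹)ᵀ = φ ↑g⁻¹ * (φ g * N * (φ g)ᵀ) * (φ ↑g⁻¹)ᵀ := by rw [hg]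
      _ = (φ ↑g⁻¹ * φ g) * N * (φ ↑g⁻¹ * φ g)ᵀ := by
          simp only [transpose_mul, Matrix.mul_assoc]
      _ = N := by rw [hinv, transpose_one, Matrix.one_mul, Matrix.mul_one]

theorem mem_integralAutGroup {N : Matrix n n ℝ} {g : GL n ℤ} : g ∈ integralAutGroup N ↔
    (Int.castRingHom ℝ).mapMatrix g * N * ((Int.castRingHom ℝ).mapMatrix g)ᵀ = N :=
  Iff.rfl

open scoped MatrixOrder Matrix.Norms.L2Operator

theorem exists_norm_le_of_mem_integralAutGroup {N : Matrix n n ℝ} (hN : N.PosDef) :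
    ∃ C, ∀ g ∈ integralAutGroup N, ‖(Int.castRingHom ℝ).mapMatrix (g : Matrix n n ℤ)‖ ≤ C := by
  obtain ⟨b, hb, rfl⟩ :=
    CStarAlgebra.isStrictlyPositive_iff_eq_mul_star_self.mp hN.isStrictlyPositive
  lift b to (Matrix n n ℝ)ˣ using hb
  exact ⟨_, fun g hg => norm_le_of_conj_mul_star_eq (mem_integralAutGroup.mp hg)⟩

theorem integralAutGroup_map_zmod_injective {N : Matrix n n ℝ} (hN : N.PosDef) {m : ℕ}
    (hm : 3 ≤ m) :
    Function.Injective
      ((GeneralLinearGroup.map (Int.castRingHom (ZMod m))).domRestrict (integralAutGroup N)) := by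
  rw [injective_iff_map_eq_one]
  rintro ⟨g, hg⟩ hgm
  obtain ⟨C, hC⟩ := exists_norm_le_of_mem_integralAutGroup hN
  have hpow (k : ℕ) : ‖(Int.castRingHom ℝ).mapMatrix (g : Matrix n n ℤ) ^ k‖ ≤ C := by
    rw [← map_pow]
    exact hC (g ^ k) (pow_mem hg k)
  have hmod : (Int.castRingHom (ZMod m)).mapMatrix (g : Matrix n n ℤ) = 1 := congrArg Units.val hgm
  exact Subtype.ext (Units.ext (eq_one_of_map_zmod_eq_one_of_norm_pow_le hm hmod hpow))

end IntegralAutGroup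

namespace IsIntegerMatrix

theorem exists_eq_map {ι κ : Type*} {M : Matrix ι κ ℝ} (hM : IsIntegerMatrix M) :
    ∃ A : Matrix ι κ ℤ, A.map ((↑) : ℤ → ℝ) = M := by
  choose A hA using hM
  exact ⟨Matrix.of A, by ext i j; exact (hA i j).symm⟩

theorem one_le_det {ι : Type*} [Fintype ι] [DecidableEq ι] {M : Matrix ι ι ℝ}
    (hM : IsIntegerMatrix M) (hdet : 0 < M.det) : 1 ≤ M.det := by
  obtain ⟨A, rfl⟩ := hM.exists_eq_map
  rw [← Int.cast_det] at hdet ⊢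
  exact_mod_cast hdet

end IsIntegerMatrix

theorem IsHalfIntegral.one_le_two_pow_mul_det {ι : Type*} [Fintype ι] [DecidableEq ι]
    {N : Matrix ι ι ℝ} (hN : IsHalfIntegral N) (hdet : 0 < N.det) :
    1 ≤ 2 ^ Fintype.card ι * N.det := by
  rw [← det_smul]
  refine IsIntegerMatrix.one_le_det hN.2 ?_
  rw [det_smul]
  positivity

theorem unitGroup_eq_image_integralAutGroup (t : ℕ) (N : Matrix (Fin t) (Fin t) ℝ) :
    unitGroup t N =
      (fun g : GL (Fin t) ℤ => (Int.castRingHom ℝ).mapMatrix g) '' integralAutGroup N := by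
  ext γ
  constructor
  · rintro ⟨hγ_int, hdet, hγ⟩
    obtain ⟨A, rfl⟩ := hγ_int.exists_eq_map
    rw [← Int.cast_det] at hdet
    have hA : IsUnit A.det := Int.isUnit_iff.mpr (mod_cast hdet)
    exact ⟨GeneralLinearGroup.mk'' A hA, mem_integralAutGroup.mpr hγ, rfl⟩
  · rintro ⟨g, hg, rfl⟩
    refine ⟨fun i j => ⟨g i j, rfl⟩, ?_, mem_integralAutGroup.mp hg⟩
    rw [← RingHom.map_det, eq_intCast]
    have hdet := Int.isUnit_iff.mp ((isUnit_iff_isUnit_det _).mp g.isUnit)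
    exact_mod_cast hdet

theorem unitGroup_finite_card_le_general {t : ℕ} {N : Matrix (Fin t) (Fin t) ℝ} (hN : N.PosDef)
    {m : ℕ} (hm : 3 ≤ m) :
    (unitGroup t N).Finite ∧ (unitGroup t N).ncard ∣ Nat.card (GL (Fin t) (ZMod m)) := by
  have : NeZero m := ⟨by lia⟩
  have hinj := integralAutGroup_map_zmod_injective hN hm
  have : Finite (integralAutGroup N) := Finite.of_injective _ hinj
  have hcast : Function.Injective
      fun g : GL (Fin t) ℤ => (Int.castRingHom ℝ).mapMatrix (g : Matrix (Fin t) (Fin t) ℤ) :=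
    (Matrix.map_injective Int.cast_injective).comp Units.val_injective
  rw [unitGroup_eq_image_integralAutGroup]
  refine ⟨(Set.toFinite _).image _, ?_⟩
  rw [Set.ncard_image_of_injective _ hcast]
  exact Subgroup.card_dvd_of_injective _ hinj

/-- there are constants `C, c > 0` such that for every `N ∈ L_t^+` the
group `ε(N)` is finite with `|ε(N)| ≤ C·det(N)^c`. -/
theorem unitGroup_finite_card_le {t : ℕ} (ht : 1 ≤ t) :
    ∃ C c : ℝ, 0 < C ∧ 0 < c ∧
      ∀ N : Matrix (Fin t) (Fin t) ℝ, LPlus N →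
        (unitGroup t N).Finite ∧ ((unitGroup t N).ncard : ℝ) ≤ C * N.det ^ c := by
  refine ⟨Nat.card (GL (Fin t) (ZMod 3)) * 2 ^ t, 1,
    mul_pos (mod_cast Nat.card_pos) (by positivity), one_pos, fun N hN => ?_⟩
  obtain ⟨hfin, hdvd⟩ := unitGroup_finite_card_le_general hN.2.1 le_rfl
  have hdet : 1 ≤ 2 ^ t * N.det := by
    simpa only [Fintype.card_fin] using hN.2.2.one_le_two_pow_mul_det hN.2.1.det_pos
  rw [Real.rpow_one, mul_assoc]
  exact ⟨hfin, (Nat.cast_le.mpr (Nat.le_of_dvd Nat.card_pos hdvd)).trans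
    (le_mul_of_one_le_right (Nat.cast_nonneg _) hdet)⟩
end

section
/- Let m ≥ 1, t ≥ 1, r ≥ 1 and let M ∈ L_r^+. Let R₂ be an integer t×r matrix and let R₁, R̃₁ be integer m×r matrices. Let τ₁ be a complex symmetric m×m matrix whose imaginary part v₁ := Im(τ₁) is positive definite, and let z'₁ be a complex m×t matrix with y'₁ := Im(z'₁). For an integer m×r matrix R and z ∈ ℂ^{m×r} define ϑ_{M,R}(τ₁,z) := ∑ exp(2πi·((1/4)Tr(pM⁻¹pᵀτ₁) + Tr(pzᵀ))), the sum over all integer m×r matrices p with p - R = X·(2M) for some integer m×r matrix X; and define ϑ_{M,R₂,R}(τ₁,z'₁,z'₂) := ϑ_{M,R}(τ₁, (1/2)z'₁R₂M⁻¹ + z'₂). Then, parametrizing z'₂ = τ₁a + b with a, b real m×r matrices (so that Im(z'₂) = v₁a), one has: the integral over (a,b) ∈ [0,1]^{m×r} × [0,1]^{m×r} (with Lebesgue measure) of ϑ_{M,R₂,R₁}(τ₁,z'₁,τ₁a+b) · conj(ϑ_{M,R₂,R̃₁}(τ₁,z'₁,τ₁a+b)) · exp(-4π·Tr(M·((1/2)y'₁R₂M⁻¹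 + v₁a)ᵀ·v₁⁻¹·((1/2)y'₁R₂M⁻¹ + v₁a))) · det(v₁)^{r} equals det(v₁)^{r/2}·det(4M)^{-m/2} if R₁ - R̃₁ = X·(2M) for some integer m×r matrix X, and equals 0 otherwise. -/
open Matrix MeasureTheory
open scoped Classical

/-- The theta series `ϑ_{M,R}(τ,z) = ∑_{p ≡ R mod ℤ^{(m,r)}(2M)}
exp(2πi((1/4)Tr(pM⁻¹pᵀτ) + Tr(pzᵀ)))`. -/
noncomputable def theta {m r : ℕ} (M : Matrix (Fin r) (Fin r) ℝ)
    (R : Matrix (Fin m) (Fin r) ℤ) (τ : Matrix (Fin m) (Fin m) ℂ)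
    (z : Matrix (Fin m) (Fin r) ℂ) : ℂ :=
  ∑' p : {p : Matrix (Fin m) (Fin r) ℤ //
      ∃ X : Matrix (Fin m) (Fin r) ℤ,
        (p - R).map (Int.cast : ℤ → ℝ) = X.map (Int.cast : ℤ → ℝ) * ((2 : ℝ) • M)},
    Complex.exp (2 * (Real.pi : ℂ) * Complex.I *
      ((1/4 : ℂ) * Matrix.trace
          ((((p.1.map (Int.cast : ℤ → ℝ)) * M⁻¹ * (p.1.map (Int.cast : ℤ → ℝ))ᵀ).map
            Complex.ofReal) * τ) +
        Matrix.trace ((p.1.map fun n : ℤ => (n : ℂ)) * zᵀ)))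

/-- The shifted theta series `ϑ_{M,R₂,R}(τ,z'₁,z'₂) = ϑ_{M,R}(τ, (1/2)z'₁R₂M⁻¹ + z'₂)`. -/
noncomputable def thetaShift {m t r : ℕ} (M : Matrix (Fin r) (Fin r) ℝ)
    (R₂ : Matrix (Fin t) (Fin r) ℤ) (R : Matrix (Fin m) (Fin r) ℤ)
    (τ : Matrix (Fin m) (Fin m) ℂ) (z₁ : Matrix (Fin m) (Fin t) ℂ)
    (z₂ : Matrix (Fin m) (Fin r) ℂ) : ℂ :=
  theta M R τ
    ((1/2 : ℂ) • (z₁ * (R₂.map fun n : ℤ => (n : ℂ)) * (M⁻¹.map Complex.ofReal)) + z₂)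

/-!
The shift by `½ z'₁ R₂ M⁻¹` only translates the fundamental domain, and any complex translate will
do. Put `v = Im τ`, `y = Im z`. Multiplied by the square root of the weight
`exp(-4π Tr(M yᵀ v⁻¹ y))`, the theta summand of index `p` becomes a function `W_p` of absolute
value `exp(-2π Q(v⁻¹ y + ½ p M⁻¹))`, where `Q(x) = Tr(v x M xᵀ)` is positive definite: completing
the square absorbs the quadratic term in `p`. On the unit box these Gaussians are dominated by a
summable family, so the integral of the product of two theta series is the double sum of the
integrals of `W_p · conj W_q`.

In the real translation `b` the summand `W_p` varies by the character `exp(2πi Tr(p bᵀ))`, so the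
`b`-integral kills all terms with `p ≠ q`, and nothing survives when the two cosets are disjoint.
When they coincide, `½ p M⁻¹` runs through a full translate of `ℤ^{m×r}`, so the remaining
integrals over the unit box tile the Gaussian integral of `exp(-4π Q)` over `ℝ^{m×r}`. Its value
comes from the substitution `x ↦ A x Bᵀ`, with `v = Aᵀ A` and `M = Bᵀ B`, of determinant
`det(A)^r det(B)^m`.
-/

section LatticeCosets

variable {ι κ : Type*} [Fintype κ]

/-- The lattice `ℤ^{(m,r)}(2M)` of integer matrices of the form `X * (2M)` with `X` integral. -/
def twoMulLattice (M : Matrix κ κ ℝ) : AddSubgroup (Matrix ι κ ℤ) where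
  carrier := {p | ∃ X : Matrix ι κ ℤ,
    p.map (Int.cast : ℤ → ℝ) = X.map (Int.cast : ℤ → ℝ) * ((2 : ℝ) • M)}
  zero_mem' := ⟨0, by ext i j; simp⟩
  add_mem' := by
    rintro p q ⟨X, hX⟩ ⟨Y, hY⟩
    exact ⟨X + Y, by simp only [Matrix.map_add _ Int.cast_add, hX, hY, Matrix.add_mul]⟩
  neg_mem' := by
    rintro p ⟨X, hX⟩
    exact ⟨-X, by simp only [Matrix.map_neg (Int.cast : ℤ → ℝ) Int.cast_neg, hX, Matrix.neg_mul]⟩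

/-- The coset `R + ℤ^{(m,r)}(2M)`, the index set of the theta series `ϑ_{M,R}`. -/
def latticeCoset (M : Matrix κ κ ℝ) (R : Matrix ι κ ℤ) : Set (Matrix ι κ ℤ) :=
  {p | p - R ∈ twoMulLattice M}

lemma latticeCoset_eq_of_mem {M : Matrix κ κ ℝ} {R R' : Matrix ι κ ℤ}
    (h : R ∈ latticeCoset M R') : latticeCoset M R = latticeCoset M R' := by
  ext p
  have hp : p - R' = p - R + (R - R') := (sub_add_sub_cancel p R R').symm
  rw [latticeCoset, latticeCoset, Set.mem_ofPred_eq, Set.mem_ofPred_eq, hp,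
    AddSubgroup.add_mem_cancel_right _ h]

lemma latticeCoset_inter_eq_empty {M : Matrix κ κ ℝ} {R R' : Matrix ι κ ℤ}
    (h : R ∉ latticeCoset M R') : latticeCoset M R ∩ latticeCoset M R' = ∅ := by
  refine Set.eq_empty_of_forall_notMem fun p ⟨hp, hp'⟩ => h ?_
  have := sub_mem (show p - R' ∈ twoMulLattice M from hp') hp
  rwa [sub_sub_sub_cancel_left] at this

/-- The matrix `(1/2) p M⁻¹`: the term of index `p` of a theta series, once weighted, is a Gaussian
centred at minus this point. -/
noncomputable def thetaCenter [DecidableEq κ] (M : Matrix κ κ ℝ) (p : Matrix ι κ ℤ) :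
    Matrix ι κ ℝ :=
  (1 / 2 : ℝ) • (p.map (Int.cast : ℤ → ℝ) * M⁻¹)

lemma map_intCast_mul (X : Matrix ι κ ℤ) (N : Matrix κ κ ℤ) :
    (X * N).map (Int.cast : ℤ → ℝ) = X.map (Int.cast : ℤ → ℝ) * N.map (Int.cast : ℤ → ℝ) :=
  Matrix.map_mul (f := Int.castRingHom ℝ)

lemma thetaCenter_add_mul [DecidableEq κ] {M : Matrix κ κ ℝ} (hM : IsUnit M.det)
    {N : Matrix κ κ ℤ} (hN : N.map (Int.cast : ℤ → ℝ) = (2 : ℝ) • M) (R X : Matrix ι κ ℤ) :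
    thetaCenter M (R + X * N) = thetaCenter M R + X.map (Int.cast : ℤ → ℝ) := by
  rw [thetaCenter, thetaCenter, Matrix.map_add _ Int.cast_add, map_intCast_mul, hN, Matrix.add_mul,
    smul_add, Matrix.mul_smul, Matrix.smul_mul, mul_nonsing_inv_cancel_right _ _ hM, smul_smul]
  norm_num

lemma exists_equiv_latticeCoset [DecidableEq κ] {M : Matrix κ κ ℝ} (hM : IsUnit M.det)
    (hint : IsIntegerMatrix ((2 : ℝ) • M)) (R : Matrix ι κ ℤ) :
    ∃ e : Matrix ι κ ℤ ≃ latticeCoset M R, ∀ X,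
      thetaCenter M (e X : Matrix ι κ ℤ) = thetaCenter M R + X.map (Int.cast : ℤ → ℝ) := by
  obtain ⟨N, hN⟩ : ∃ N : Matrix κ κ ℤ, N.map (Int.cast : ℤ → ℝ) = (2 : ℝ) • M := by
    choose N hN using hint
    exact ⟨Matrix.of N, by ext i j; exact (hN i j).symm⟩
  have cast_injective : Function.Injective fun X : Matrix ι κ ℤ => X.map (Int.cast : ℤ → ℝ) :=
    Matrix.map_injective Int.cast_injective
  let f (X : Matrix ι κ ℤ) : latticeCoset M R :=
    ⟨R + X * N, X, by rw [add_sub_cancel_left, map_intCast_mul, hN]⟩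
  have center_f (X : Matrix ι κ ℤ) :
      thetaCenter M (f X : Matrix ι κ ℤ) = thetaCenter M R + X.map (Int.cast : ℤ → ℝ) :=
    thetaCenter_add_mul hM hN R X
  refine ⟨Equiv.ofBijective f ⟨fun X Y h => cast_injective ?_, ?_⟩, center_f⟩
  · simpa only [center_f, add_right_inj] using
      congrArg (fun p : latticeCoset M R => thetaCenter M (p : Matrix ι κ ℤ)) h
  · rintro ⟨p, X, hX⟩
    refine ⟨X, Subtype.ext (eq_sub_iff_add_eq'.mp (cast_injective ?_))⟩
    exact ((map_intCast_mul X N).trans (by rw [hN])).trans hX.symm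

end LatticeCosets

lemma tsum_prod_ite_eq {α E : Type*} [DecidableEq α] [AddCommMonoid E] [TopologicalSpace E]
    (s t : Set α) (f : α → E) :
    ∑' x : s × t, (if (x.1 : α) = x.2 then f x.1 else 0) = ∑' x : ↥(s ∩ t), f x := by
  let diag (x : ↥(s ∩ t)) : s × t := (⟨x, x.2.1⟩, ⟨x, x.2.2⟩)
  have hdiag : Function.Injective diag := fun x y h =>
    Subtype.ext (congrArg (fun z : s × t => (z.1 : α)) h)
  rw [← hdiag.tsum_eq]
  · simp [diag]
  · rintro ⟨⟨x, hx⟩, ⟨y, hy⟩⟩ h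
    obtain rfl : x = y := by by_contra hne; simp [hne] at h
    exact ⟨⟨x, hx, hy⟩, rfl⟩

section MatrixForm

variable {ι κ : Type*} [Fintype ι] [Fintype κ]

/-- The quadratic form `x ↦ Tr(v x M xᵀ)` on `m × r` matrices. -/
def matrixForm (v : Matrix ι ι ℝ) (M : Matrix κ κ ℝ) (x : Matrix ι κ ℝ) : ℝ :=
  trace (v * x * M * xᵀ)

lemma matrixForm_transpose_mul_self (A : Matrix ι ι ℝ) (B : Matrix κ κ ℝ) (x : Matrix ι κ ℝ) :
    matrixForm (Aᵀ * A) (Bᵀ * B) x = ∑ i, ∑ j, (A * x * Bᵀ) i j ^ 2 := by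
  have h : matrixForm (Aᵀ * A) (Bᵀ * B) x = trace (A * x * Bᵀ * (A * x * Bᵀ)ᵀ) := by
    rw [matrixForm, Matrix.mul_assoc Aᵀ, Matrix.mul_assoc Aᵀ, Matrix.mul_assoc Aᵀ,
      Matrix.trace_mul_comm]
    simp only [transpose_mul, transpose_transpose, Matrix.mul_assoc]
  simp only [h, trace, diag, Matrix.mul_apply (M := A * x * Bᵀ), transpose_apply, pow_two]

open scoped MatrixOrder in
lemma exists_transpose_mul_self_eq [DecidableEq ι] {v : Matrix ι ι ℝ} (hv : v.PosDef) :
    ∃ A : Matrix ι ι ℝ, IsUnit A.det ∧ v = Aᵀ * A := by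
  obtain ⟨A, hA⟩ := CStarAlgebra.nonneg_iff_eq_star_mul_self.mp hv.posSemidef.nonneg
  rw [star_eq_conjTranspose, conjTranspose_eq_transpose_of_trivial] at hA
  refine ⟨A, isUnit_iff_ne_zero.mpr fun h => hv.det_pos.ne' ?_, hA⟩
  rw [hA, det_mul, h, mul_zero]

open scoped Matrix.Norms.Frobenius in
lemma exists_pos_mul_sum_sq_le_matrixForm {v : Matrix ι ι ℝ} {M : Matrix κ κ ℝ} (hv : v.PosDef)
    (hM : M.PosDef) :
    ∃ c > 0, ∀ x : Matrix ι κ ℝ, c * ∑ i, ∑ j, x i j ^ 2 ≤ matrixForm v M x := by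
  classical
  obtain ⟨A, hA, rfl⟩ := exists_transpose_mul_self_eq hv
  obtain ⟨B, hB, rfl⟩ := exists_transpose_mul_self_eq hM
  rw [← det_transpose] at hB
  have norm_sq (y : Matrix ι κ ℝ) : ∑ i, ∑ j, y i j ^ 2 = ‖y‖ ^ 2 := by
    rw [frobenius_norm_def, ← Real.sqrt_eq_rpow, Real.sq_sqrt (by positivity)]
    simp
  refine ⟨((‖A⁻¹‖ * ‖Bᵀ⁻¹‖) ^ 2 + 1)⁻¹, by positivity, fun x => ?_⟩
  have hx : ‖x‖ ≤ ‖A⁻¹‖ * ‖A * x * Bᵀ‖ * ‖Bᵀ⁻¹‖ :=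
    calc ‖x‖ = ‖A⁻¹ * (A * x * Bᵀ) * Bᵀ⁻¹‖ := by
          rw [Matrix.mul_assoc A, nonsing_inv_mul_cancel_left _ _ hA,
            mul_nonsing_inv_cancel_right _ _ hB]
      _ ≤ ‖A⁻¹‖ * ‖A * x * Bᵀ‖ * ‖Bᵀ⁻¹‖ :=
          (frobenius_norm_mul _ _).trans (by gcongr; exact frobenius_norm_mul _ _)
  rw [matrixForm_transpose_mul_self, norm_sq, norm_sq, inv_mul_le_iff₀ (by positivity)]
  calc ‖x‖ ^ 2 ≤ (‖A⁻¹‖ * ‖A * x * Bᵀ‖ * ‖Bᵀ⁻¹‖) ^ 2 := by gcongr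
    _ = (‖A⁻¹‖ * ‖Bᵀ⁻¹‖) ^ 2 * ‖A * x * Bᵀ‖ ^ 2 := by ring
    _ ≤ ((‖A⁻¹‖ * ‖Bᵀ⁻¹‖) ^ 2 + 1) * ‖A * x * Bᵀ‖ ^ 2 := by gcongr; linarith

lemma trace_mul_transpose_comm {v : Matrix ι ι ℝ} (hv : v.IsSymm) (x y : Matrix ι κ ℝ) :
    trace (v * x * yᵀ) = trace (v * y * xᵀ) := by
  rw [← trace_transpose (v * x * yᵀ), transpose_mul, transpose_mul, transpose_transpose, hv.eq,
    ← Matrix.mul_assoc, trace_mul_comm, Matrix.mul_assoc]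

lemma matrixForm_add {v : Matrix ι ι ℝ} {M : Matrix κ κ ℝ} (hv : v.IsSymm)
    (hM : M.IsSymm) (x y : Matrix ι κ ℝ) :
    matrixForm v M (x + y) =
      matrixForm v M x + 2 * trace (v * y * M * xᵀ) + matrixForm v M y := by
  have hcross : trace (v * x * M * yᵀ) = trace (v * y * M * xᵀ) := by
    have := trace_mul_transpose_comm hv x (y * M)
    rw [transpose_mul, hM.eq, ← Matrix.mul_assoc, ← Matrix.mul_assoc] at this
    exact this
  simp only [matrixForm, transpose_add, Matrix.mul_add, Matrix.add_mul, trace_add, hcross]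
  ring

lemma trace_add_trace_add_trace_eq_matrixForm [DecidableEq ι] [DecidableEq κ] {v : Matrix ι ι ℝ}
    {M : Matrix κ κ ℝ} (hv : v.IsSymm) (hvu : IsUnit v.det) (hM : M.IsSymm) (hMu : IsUnit M.det)
    (p y : Matrix ι κ ℝ) :
    1 / 4 * trace (p * M⁻¹ * pᵀ * v) + trace (p * yᵀ) + trace (M * yᵀ * v⁻¹ * y) =
      matrixForm v M (v⁻¹ * y + (1 / 2 : ℝ) • (p * M⁻¹)) := by
  have hvi : (v⁻¹)ᵀ = v⁻¹ := by rw [transpose_nonsing_inv, hv.eq]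
  have hMi : (M⁻¹)ᵀ = M⁻¹ := by rw [transpose_nonsing_inv, hM.eq]
  have hyy : matrixForm v M (v⁻¹ * y) = trace (M * yᵀ * v⁻¹ * y) := by
    rw [matrixForm, mul_nonsing_inv_cancel_left _ _ hvu, transpose_mul, hvi, Matrix.mul_assoc y,
      trace_mul_comm]
    simp only [Matrix.mul_assoc]
  have hpy : trace (v * (p * M⁻¹) * M * (v⁻¹ * y)ᵀ) = trace (p * yᵀ) := by
    rw [Matrix.mul_assoc v, nonsing_inv_mul_cancel_right _ _ hMu, transpose_mul, hvi,
      Matrix.mul_assoc, trace_mul_comm, ← Matrix.mul_assoc, nonsing_inv_mul_cancel_right _ _ hvu]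
  have hpp : matrixForm v M (p * M⁻¹) = trace (p * M⁻¹ * pᵀ * v) := by
    rw [matrixForm, Matrix.mul_assoc v, nonsing_inv_mul_cancel_right _ _ hMu, transpose_mul, hMi,
      Matrix.mul_assoc, trace_mul_comm, Matrix.mul_assoc p M⁻¹]
  rw [matrixForm_add hv hM, hyy, ← hpy, ← hpp, matrixForm, matrixForm]
  simp only [transpose_smul, Matrix.mul_smul, Matrix.smul_mul, trace_smul, smul_eq_mul]
  ring

end MatrixForm

section LinearChangeOfVariables

variable {E F : Type*} [NormedAddCommGroup E] [NormedSpace ℝ E] [FiniteDimensional ℝ E]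
  [MeasurableSpace E] [BorelSpace E] [NormedAddCommGroup F] {L : E →ₗ[ℝ] E}

lemma measurableEmbedding_of_det_ne_zero (hL : LinearMap.det L ≠ 0) : MeasurableEmbedding L :=
  (LinearMap.equivOfDetNeZero L hL).toContinuousLinearEquiv.toHomeomorph.measurableEmbedding

variable (μ : Measure E) [μ.IsAddHaarMeasure]

lemma integrable_comp_linearMap (hL : LinearMap.det L ≠ 0) {g : E → F} (hg : Integrable g μ) :
    Integrable (fun x => g (L x)) μ := by
  refine ((measurableEmbedding_of_det_ne_zero hL).integrable_map_iff (μ := μ)).mp ?_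
  rw [Measure.map_linearMap_addHaar_eq_smul_addHaar μ hL]
  exact hg.smul_measure ENNReal.ofReal_ne_top

lemma integral_comp_linearMap [NormedSpace ℝ F] (hL : LinearMap.det L ≠ 0) (g : E → F) :
    ∫ x, g (L x) ∂μ = |LinearMap.det L|⁻¹ • ∫ x, g x ∂μ := by
  rw [← (measurableEmbedding_of_det_ne_zero hL).integral_map (μ := μ) g,
    Measure.map_linearMap_addHaar_eq_smul_addHaar μ hL, integral_smul_measure,
    ENNReal.toReal_ofReal (abs_nonneg _), abs_inv]

end LinearChangeOfVariables

section GaussianIntegral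

variable {ι κ : Type*} [Fintype ι] [Fintype κ]

/-- The linear endomorphism `x ↦ A x Bᵀ` of the space of `m × r` matrices, written as
functions because that is where Lebesgue measure lives. -/
def sandwich (A : Matrix ι ι ℝ) (B : Matrix κ κ ℝ) : (ι → κ → ℝ) →ₗ[ℝ] ι → κ → ℝ where
  toFun x := A * Matrix.of x * Bᵀ
  map_add' x y := by
    change A * (Matrix.of x + Matrix.of y) * Bᵀ = _
    rw [Matrix.mul_add, Matrix.add_mul]; rfl
  map_smul' c x := by
    change A * (c • Matrix.of x) * Bᵀ = _
    rw [Matrix.mul_smul, Matrix.smul_mul]; rfl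

-- Column-major vectorization turns `x ↦ A x Bᵀ` into the Kronecker product `B ⊗ A`.
lemma det_sandwich [DecidableEq ι] [DecidableEq κ] (A : Matrix ι ι ℝ) (B : Matrix κ κ ℝ) :
    LinearMap.det (sandwich A B) = A.det ^ Fintype.card κ * B.det ^ Fintype.card ι := by
  let vecEquiv : (ι → κ → ℝ) ≃ₗ[ℝ] (κ × ι → ℝ) :=
    { toFun := fun x => vec (Matrix.of x)
      invFun := fun y i j => y (j, i)
      map_add' := fun _ _ => rfl
      map_smul' := fun _ _ => rfl
      left_inv := fun _ => rfl
      right_inv := fun _ => rfl }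
  have hconj : (vecEquiv : (ι → κ → ℝ) →ₗ[ℝ] κ × ι → ℝ) ∘ₗ sandwich A B ∘ₗ
      (vecEquiv.symm : (κ × ι → ℝ) →ₗ[ℝ] ι → κ → ℝ) = toLin' (kroneckerMap (· * ·) B A) :=
    LinearMap.ext fun y => (kronecker_mulVec_vec A (Matrix.of (vecEquiv.symm y)) B).symm
  rw [← LinearMap.det_conj (sandwich A B) vecEquiv, hconj, LinearMap.det_toLin', det_kronecker,
    mul_comm]

lemma exp_neg_mul_sum_sq (b : ℝ) (x : ι → κ → ℝ) :
    Real.exp (-b * ∑ i, ∑ j, x i j ^ 2) = ∏ i, ∏ j, Real.exp (-b * x i j ^ 2) := by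
  simp only [← Real.exp_sum, Finset.mul_sum]

lemma integrable_exp_neg_mul_sum_sq {b : ℝ} (hb : 0 < b) :
    Integrable fun x : ι → κ → ℝ => Real.exp (-b * ∑ i, ∑ j, x i j ^ 2) := by
  simp only [exp_neg_mul_sum_sq]
  exact Integrable.fintype_prod (f := fun _ (y : κ → ℝ) => ∏ j, Real.exp (-b * y j ^ 2)) fun _ =>
    Integrable.fintype_prod (f := fun _ (y : ℝ) => Real.exp (-b * y ^ 2)) fun _ =>
      integrable_exp_neg_mul_sq hb

lemma integral_exp_neg_mul_sum_sq (b : ℝ) :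
    ∫ x : ι → κ → ℝ, Real.exp (-b * ∑ i, ∑ j, x i j ^ 2) =
      (√(Real.pi / b) ^ Fintype.card κ) ^ Fintype.card ι := by
  simp only [exp_neg_mul_sum_sq]
  rw [integral_fintype_prod_volume_eq_pow fun y : κ → ℝ => ∏ j, Real.exp (-b * y j ^ 2),
    integral_fintype_prod_volume_eq_pow fun y : ℝ => Real.exp (-b * y ^ 2), integral_gaussian]

variable {v : Matrix ι ι ℝ} {M : Matrix κ κ ℝ}

lemma exists_linearMap_matrixForm_eq_sum_sq [DecidableEq ι] [DecidableEq κ] (hv : v.PosDef)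
    (hM : M.PosDef) :
    ∃ L : (ι → κ → ℝ) →ₗ[ℝ] ι → κ → ℝ, LinearMap.det L ≠ 0 ∧
      |LinearMap.det L| = √v.det ^ Fintype.card κ * √M.det ^ Fintype.card ι ∧
      ∀ x, matrixForm v M (Matrix.of x) = ∑ i, ∑ j, L x i j ^ 2 := by
  obtain ⟨A, hA, rfl⟩ := exists_transpose_mul_self_eq hv
  obtain ⟨B, hB, rfl⟩ := exists_transpose_mul_self_eq hM
  refine ⟨sandwich A B, ?_, ?_, fun x => matrixForm_transpose_mul_self A B (Matrix.of x)⟩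
  · rw [det_sandwich]
    exact mul_ne_zero (pow_ne_zero _ hA.ne_zero) (pow_ne_zero _ hB.ne_zero)
  · simp only [det_sandwich, det_mul, det_transpose, Real.sqrt_mul_self_eq_abs, abs_mul, abs_pow]

lemma integrable_exp_neg_mul_matrixForm (hv : v.PosDef) (hM : M.PosDef) {b : ℝ} (hb : 0 < b) :
    Integrable fun x : ι → κ → ℝ => Real.exp (-b * matrixForm v M (Matrix.of x)) := by
  classical
  obtain ⟨L, hL0, -, hL⟩ := exists_linearMap_matrixForm_eq_sum_sq (κ := κ) hv hM
  simp only [hL]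
  exact integrable_comp_linearMap volume hL0 (integrable_exp_neg_mul_sum_sq hb)

variable [DecidableEq ι] [DecidableEq κ]

lemma integral_exp_neg_mul_matrixForm (hv : v.PosDef) (hM : M.PosDef) (b : ℝ) :
    ∫ x : ι → κ → ℝ, Real.exp (-b * matrixForm v M (Matrix.of x)) =
      (√v.det ^ Fintype.card κ * √M.det ^ Fintype.card ι)⁻¹ *
        (√(Real.pi / b) ^ Fintype.card κ) ^ Fintype.card ι := by
  obtain ⟨L, hL0, hdet, hL⟩ := exists_linearMap_matrixForm_eq_sum_sq (κ := κ) hv hM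
  simp only [hL]
  rw [integral_comp_linearMap volume hL0 fun y => Real.exp (-b * ∑ i, ∑ j, y i j ^ 2), hdet,
    integral_exp_neg_mul_sum_sq, smul_eq_mul]

lemma integral_exp_neg_four_pi_mul_matrixForm (hv : v.PosDef) (hM : M.PosDef) :
    (∫ x : ι → κ → ℝ, Real.exp (-(4 * Real.pi) * matrixForm v M (Matrix.of x))) *
        v.det ^ Fintype.card κ =
      v.det ^ ((Fintype.card κ : ℝ) / 2) *
        ((4 : ℝ) • M).det ^ (-((Fintype.card ι : ℝ) / 2)) := by
  have hv0 := hv.det_pos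
  have hM0 := hM.det_pos
  have hsqrt : √(Real.pi / (4 * Real.pi)) = 2⁻¹ := by
    rw [Real.sqrt_eq_iff_mul_self_eq_of_pos (by norm_num)]
    field_simp
    norm_num
  have hsqrt4 : √((4 : ℝ) ^ Fintype.card κ) = 2 ^ Fintype.card κ := by
    rw [show (4 : ℝ) = 2 ^ 2 by norm_num, pow_right_comm, Real.sqrt_sq (by positivity)]
  have hv2 : v.det ^ Fintype.card κ = (√v.det ^ Fintype.card κ) ^ 2 := by
    rw [pow_right_comm, Real.sq_sqrt hv0.le]
  rw [integral_exp_neg_mul_matrixForm hv hM, hsqrt, det_smul, Real.rpow_neg (by positivity),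
    Real.rpow_div_two_eq_sqrt _ hv0.le, Real.rpow_div_two_eq_sqrt _ (by positivity),
    Real.rpow_natCast, Real.rpow_natCast, Real.sqrt_mul (by positivity), hsqrt4, hv2]
  simp only [inv_pow, mul_pow]
  field_simp

end GaussianIntegral

section GaussianSummability

lemma summable_exp_neg_mul_int_sq {b : ℝ} (hb : 0 < b) :
    Summable fun n : ℤ => Real.exp (-b * (n : ℝ) ^ 2) := by
  have hnat : Summable fun n : ℕ => Real.exp (-b * (n : ℝ) ^ 2) := by
    have := Real.summable_exp_nat_mul_of_ge (neg_neg_of_pos hb) (f := fun n : ℕ => (n : ℝ) ^ 2)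
      fun n => by exact_mod_cast Nat.le_self_pow two_ne_zero n
    simpa only using this
  exact Summable.of_nat_of_neg (by simpa using hnat) (by simpa using hnat)

lemma summable_fin_prod {α : Type*} {f : α → ℝ} (hf0 : 0 ≤ f) (hf : Summable f) (n : ℕ) :
    Summable fun x : Fin n → α => ∏ i, f (x i) := by
  induction n with
  | zero => exact Summable.of_finite
  | succ n ih =>
    rw [← (Fin.consEquiv fun _ : Fin (n + 1) => α).summable_iff]
    refine (hf.mul_of_nonneg ih hf0 fun x => Finset.prod_nonneg fun i _ => hf0 _).congr fun x => ?_
    simp [Fin.prod_univ_succ, Fin.consEquiv]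

lemma summable_pi_prod {ι α : Type*} [Fintype ι] {f : α → ℝ} (hf0 : 0 ≤ f) (hf : Summable f) :
    Summable fun x : ι → α => ∏ i, f (x i) := by
  rw [← (Equiv.arrowCongr (Fintype.equivFin ι) (Equiv.refl α)).symm.summable_iff]
  refine (summable_fin_prod hf0 hf (Fintype.card ι)).congr fun x => ?_
  exact ((Fintype.equivFin ι).prod_comp fun i => f (x i)).symm

variable {ι κ : Type*} [Fintype ι] [Fintype κ]

lemma summable_exp_neg_mul_sum_int_sq {b : ℝ} (hb : 0 < b) :
    Summable fun X : Matrix ι κ ℤ => Real.exp (-b * ∑ i, ∑ j, (X i j : ℝ) ^ 2) := by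
  have hrow := summable_pi_prod (ι := κ) (fun n : ℤ => (Real.exp_pos (-b * (n : ℝ) ^ 2)).le)
    (summable_exp_neg_mul_int_sq hb)
  refine (summable_pi_prod (ι := ι) (fun _ => Finset.prod_nonneg fun _ _ => (Real.exp_pos _).le)
    hrow).congr fun X => ?_
  exact (exp_neg_mul_sum_sq b fun i j => (X i j : ℝ)).symm

lemma sum_sq_le_two_mul_add (x y : ι → κ → ℝ) :
    ∑ i, ∑ j, y i j ^ 2 ≤ 2 * ∑ i, ∑ j, x i j ^ 2 + 2 * ∑ i, ∑ j, (x i j + y i j) ^ 2 := by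
  simp only [Finset.mul_sum, ← Finset.sum_add_distrib]
  gcongr with i _ j _
  nlinarith [sq_nonneg (2 * x i j + y i j)]

lemma exists_summable_exp_neg_matrixForm_le {v : Matrix ι ι ℝ} {M : Matrix κ κ ℝ} (hv : v.PosDef)
    (hM : M.PosDef) {b : ℝ} (hb : 0 < b) {K : Set (Matrix ι κ ℝ)} (hK : IsCompact K) :
    ∃ u : Matrix ι κ ℤ → ℝ, Summable u ∧ ∀ X, ∀ x ∈ K,
      Real.exp (-b * matrixForm v M (x + X.map (Int.cast : ℤ → ℝ))) ≤ u X := by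
  obtain ⟨c, hc, hQ⟩ := exists_pos_mul_sum_sq_le_matrixForm (ι := ι) hv hM
  obtain ⟨C, hC⟩ : ∃ C, ∀ x ∈ K, ∑ i, ∑ j, x i j ^ 2 ≤ C := by
    have hcont : Continuous fun x : Matrix ι κ ℝ => ∑ i, ∑ j, x i j ^ 2 := by fun_prop
    obtain ⟨C, hC⟩ := hK.bddAbove_image hcont.continuousOn
    exact ⟨C, fun x hx => hC ⟨x, hx, rfl⟩⟩
  refine ⟨fun X => Real.exp (b * c * C) * Real.exp (-(b * c / 2) * ∑ i, ∑ j, (X i j : ℝ) ^ 2),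
    (summable_exp_neg_mul_sum_int_sq (by positivity)).mul_left _, fun X x hx => ?_⟩
  refine le_of_le_of_eq (Real.exp_le_exp.mpr ?_) (Real.exp_add _ _)
  have hX := sum_sq_le_two_mul_add x (X.map Int.cast)
  have hform := hQ (x + X.map Int.cast)
  have := mul_le_mul_of_nonneg_left (hC x hx) (mul_pos hb hc).le
  have := mul_le_mul_of_nonneg_left hX (mul_pos hb hc).le
  have := mul_le_mul_of_nonneg_left hform hb.le
  simp only [Matrix.map_apply, Matrix.add_apply] at *
  linarith

end GaussianSummability

section UnitCube

variable {ι κ : Type*}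

lemma floor_fiber_preimage_add (X : Matrix ι κ ℤ) :
    (· + fun i j => (X i j : ℝ)) ⁻¹' {a : ι → κ → ℝ | ∀ i j, ⌊a i j⌋ = X i j} =
      Set.pi Set.univ fun _ => Set.pi Set.univ fun _ => Set.Ico 0 1 := by
  ext a
  simp only [Set.mem_preimage, Set.mem_ofPred_eq, Pi.add_apply, Int.floor_add_intCast,
    add_eq_right, Int.floor_eq_zero_iff, Set.mem_pi, Set.mem_univ, true_imp_iff]

variable [Fintype ι] [Fintype κ]

lemma pi_Ico_ae_eq_Icc :
    (Set.pi Set.univ fun _ : ι => Set.pi Set.univ fun _ : κ => Set.Ico (0 : ℝ) 1)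
      =ᵐ[volume] Set.Icc (0 : ι → κ → ℝ) 1 := by
  rw [← Set.pi_univ_Icc]
  refine Measure.ae_eq_set_pi fun i _ => ?_
  exact Measure.univ_pi_Ico_ae_eq_Icc

lemma hasSum_setIntegral_Icc_add_intCast {E : Type*} [NormedAddCommGroup E] [NormedSpace ℝ E]
    {g : (ι → κ → ℝ) → E} (hg : Integrable g) :
    HasSum (fun X : Matrix ι κ ℤ => ∫ a in Set.Icc 0 1, g (a + fun i j => (X i j : ℝ)))
      (∫ a, g a) := by
  have : Countable (Matrix ι κ ℤ) := inferInstanceAs (Countable (ι → κ → ℤ))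
  let fiber (X : Matrix ι κ ℤ) : Set (ι → κ → ℝ) := {a | ∀ i j, ⌊a i j⌋ = X i j}
  have hmeas (X) : MeasurableSet (fiber X) := by
    simp only [fiber, Set.ofPred_forall]
    refine MeasurableSet.iInter fun i => MeasurableSet.iInter fun j => ?_
    exact measurableSet_eq_fun (by fun_prop) measurable_const
  have hdisj : Pairwise (Function.onFun Disjoint fiber) := fun X Y hXY =>
    Set.disjoint_left.mpr fun a hX hY => hXY (by ext i j; rw [← hX i j, ← hY i j])
  have hcover : ⋃ X, fiber X = Set.univ :=
    Set.iUnion_eq_univ_iff.mpr fun a => ⟨Matrix.of fun i j => ⌊a i j⌋, fun _ _ => rfl⟩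
  have h := hasSum_integral_iUnion hmeas hdisj hg.integrableOn
  rw [hcover, setIntegral_univ] at h
  refine h.congr_fun fun X => ?_
  let w : ι → κ → ℝ := fun i j => X i j
  rw [← (measurePreserving_add_right volume w).setIntegral_preimage_emb
    (measurableEmbedding_addRight w) g, floor_fiber_preimage_add,
    setIntegral_congr_set pi_Ico_ae_eq_Icc]

lemma hasSum_setIntegral_Icc_add_thetaCenter {E : Type*} [NormedAddCommGroup E] [NormedSpace ℝ E]
    [DecidableEq κ] {M : Matrix κ κ ℝ} (hM : IsUnit M.det) (hint : IsIntegerMatrix ((2 : ℝ) • M))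
    (R : Matrix ι κ ℤ) {g : (ι → κ → ℝ) → E} (hg : Integrable g) (y : Matrix ι κ ℝ) :
    HasSum (fun p : latticeCoset M R =>
      ∫ a in Set.Icc 0 1, g (a + Matrix.of.symm (y + thetaCenter M p))) (∫ a, g a) := by
  obtain ⟨e, he⟩ := exists_equiv_latticeCoset hM hint R
  let s : ι → κ → ℝ := Matrix.of.symm (y + thetaCenter M R)
  rw [← integral_add_right_eq_self g s]
  refine e.hasSum_iff.mp ((hasSum_setIntegral_Icc_add_intCast (hg.comp_add_right s)).congr_fun
    fun X => ?_)
  refine setIntegral_congr_fun measurableSet_Icc fun a _ => congrArg g ?_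
  ext i j
  simp [he, s]
  ring

/-- The character `b ↦ exp(2πi Tr(p bᵀ))` of the torus `ℝ^{m×r}/ℤ^{m×r}`. -/
noncomputable def torusChar (p : Matrix ι κ ℤ) (b : ι → κ → ℝ) : ℂ :=
  ∏ i, ∏ j, Complex.exp (2 * Real.pi * Complex.I * (p i j : ℂ) * b i j)

lemma torusChar_mul_conj (p q : Matrix ι κ ℤ) (b : ι → κ → ℝ) :
    torusChar p b * (starRingEnd ℂ) (torusChar q b) = torusChar (p - q) b := by
  simp only [torusChar, map_prod, ← Finset.prod_mul_distrib, ← Complex.exp_conj, ← Complex.exp_add]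
  refine Finset.prod_congr rfl fun i _ => Finset.prod_congr rfl fun j _ => ?_
  congr 1
  simp only [map_mul, Complex.conj_ofNat, Complex.conj_ofReal, Complex.conj_I, map_intCast,
    Matrix.sub_apply, Int.cast_sub]
  ring

lemma integral_Icc_exp_two_pi_I_mul (n : ℤ) :
    ∫ x in Set.Icc (0 : ℝ) 1, Complex.exp (2 * Real.pi * Complex.I * (n : ℂ) * x) =
      if n = 0 then 1 else 0 := by
  rw [integral_Icc_eq_integral_Ioc, ← intervalIntegral.integral_of_le zero_le_one]
  split_ifs with h
  · simp [h]
  · have hc : 2 * Real.pi * Complex.I * (n : ℂ) ≠ 0 := by simp [Real.pi_ne_zero, h]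
    have hperiod : Complex.exp (2 * Real.pi * Complex.I * (n : ℂ) * (1 : ℝ)) = 1 :=
      Complex.exp_eq_one_iff.mpr ⟨n, by push_cast; ring⟩
    rw [integral_exp_mul_complex hc, hperiod]
    simp

lemma restrict_Icc_eq_pi :
    (volume : Measure (ι → κ → ℝ)).restrict (Set.Icc 0 1) =
      Measure.pi fun _ => Measure.pi fun _ => volume.restrict (Set.Icc (0 : ℝ) 1) := by
  simp only [← Measure.restrict_pi_pi, ← volume_pi, Set.pi_univ_Icc]
  rfl

lemma integral_torusChar (p : Matrix ι κ ℤ) :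
    ∫ b in Set.Icc 0 1, torusChar p b = if p = 0 then 1 else 0 := by
  have hrow (i : ι) : ∫ y, ∏ j, Complex.exp (2 * Real.pi * Complex.I * (p i j : ℂ) * (y j : ℝ))
      ∂(Measure.pi fun _ : κ => volume.restrict (Set.Icc (0 : ℝ) 1)) =
      ∏ j, if p i j = 0 then 1 else 0 := by
    rw [integral_fintype_prod_eq_prod (f := fun j (y : ℝ) =>
      Complex.exp (2 * Real.pi * Complex.I * (p i j : ℂ) * y))]
    simp only [integral_Icc_exp_two_pi_I_mul]
  unfold torusChar
  rw [restrict_Icc_eq_pi, integral_fintype_prod_eq_prod (f := fun i (y : κ → ℝ) =>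
    ∏ j, Complex.exp (2 * Real.pi * Complex.I * (p i j : ℂ) * y j))]
  simp only [hrow]
  split_ifs with hp
  · simp [hp]
  · obtain ⟨i, j, hij⟩ : ∃ i j, p i j ≠ 0 := by
      by_contra! h
      exact hp (Matrix.ext h)
    exact Finset.prod_eq_zero (Finset.mem_univ i)
      (Finset.prod_eq_zero (Finset.mem_univ j) (if_neg hij))

end UnitCube

section ThetaTerms

variable {ι κ : Type*} [Fintype ι] [Fintype κ]

lemma im_trace_map_ofReal_mul (A : Matrix ι κ ℝ) (B : Matrix κ ι ℂ) :
    (trace (A.map Complex.ofReal * B)).im = trace (A * B.map Complex.im) := by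
  simp [trace, Matrix.mul_apply]

variable [DecidableEq κ]

/-- The summand of index `p` of the theta series `ϑ_{M,R}(τ,z)`; it does not depend on `R`. -/
noncomputable def thetaTerm (M : Matrix κ κ ℝ) (τ : Matrix ι ι ℂ) (p : Matrix ι κ ℤ)
    (z : Matrix ι κ ℂ) : ℂ :=
  Complex.exp (2 * (Real.pi : ℂ) * Complex.I *
    ((1 / 4 : ℂ) * trace ((p.map (Int.cast : ℤ → ℝ) * M⁻¹ * (p.map (Int.cast : ℤ → ℝ))ᵀ).map
        Complex.ofReal * τ) +
      trace ((p.map fun n : ℤ => (n : ℂ)) * zᵀ)))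

lemma theta_eq_tsum_thetaTerm {m r : ℕ} (M : Matrix (Fin r) (Fin r) ℝ)
    (R : Matrix (Fin m) (Fin r) ℤ) (τ : Matrix (Fin m) (Fin m) ℂ) (z : Matrix (Fin m) (Fin r) ℂ) :
    theta M R τ z = ∑' p : latticeCoset M R, thetaTerm M τ p z :=
  rfl

lemma norm_thetaTerm (M : Matrix κ κ ℝ) (τ : Matrix ι ι ℂ) (p : Matrix ι κ ℤ)
    (z : Matrix ι κ ℂ) :
    ‖thetaTerm M τ p z‖ = Real.exp (-(2 * Real.pi) *
      (1 / 4 * trace (p.map (Int.cast : ℤ → ℝ) * M⁻¹ * (p.map (Int.cast : ℤ → ℝ))ᵀ *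
          τ.map Complex.im) +
        trace (p.map (Int.cast : ℤ → ℝ) * (z.map Complex.im)ᵀ))) := by
  have hcast : (p.map fun n : ℤ => (n : ℂ)) = (p.map (Int.cast : ℤ → ℝ)).map Complex.ofReal := by
    ext i j; simp
  rw [thetaTerm, Complex.norm_exp, ← im_trace_map_ofReal_mul, ← transpose_map (M := z),
    ← im_trace_map_ofReal_mul, hcast]
  congr 1
  generalize trace (_ : Matrix ι ι ℂ) = A
  generalize trace (_ : Matrix ι ι ℂ) = B
  simp [Complex.mul_re, Complex.mul_im]

lemma continuous_thetaTerm (M : Matrix κ κ ℝ) (τ : Matrix ι ι ℂ) (p : Matrix ι κ ℤ) :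
    Continuous (thetaTerm M τ p) := by
  unfold thetaTerm
  fun_prop

lemma thetaTerm_add_ofReal (M : Matrix κ κ ℝ) (τ : Matrix ι ι ℂ) (p : Matrix ι κ ℤ)
    (z : Matrix ι κ ℂ) (b : ι → κ → ℝ) :
    thetaTerm M τ p (z + (Matrix.of b).map Complex.ofReal) =
      thetaTerm M τ p z * torusChar p b := by
  have hb : trace ((p.map fun n : ℤ => (n : ℂ)) * ((Matrix.of b).map Complex.ofReal)ᵀ) =
      ∑ i, ∑ j, (p i j : ℂ) * b i j := by
    simp [trace, Matrix.mul_apply]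
  simp only [thetaTerm, torusChar, ← Complex.exp_sum]
  rw [← Complex.exp_add, transpose_add, Matrix.mul_add, trace_add, hb]
  simp only [mul_assoc, ← Finset.mul_sum]
  ring_nf

variable [DecidableEq ι]

/-- The invariant weight `exp(-4π Tr(M yᵀ v⁻¹ y))`, where `v = Im τ` and `y = Im z`. -/
noncomputable def thetaWeight (M : Matrix κ κ ℝ) (τ : Matrix ι ι ℂ) (z : Matrix ι κ ℂ) : ℝ :=
  Real.exp (-4 * Real.pi *
    trace (M * (z.map Complex.im)ᵀ * (τ.map Complex.im)⁻¹ * z.map Complex.im))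

/-- A theta summand multiplied by the square root of the weight, so that the product of one such
term with the conjugate of another carries the full weight. -/
noncomputable def weightedThetaTerm (M : Matrix κ κ ℝ) (τ : Matrix ι ι ℂ) (p : Matrix ι κ ℤ)
    (z : Matrix ι κ ℂ) : ℂ :=
  thetaTerm M τ p z * √(thetaWeight M τ z)

lemma continuous_weightedThetaTerm (M : Matrix κ κ ℝ) (τ : Matrix ι ι ℂ) (p : Matrix ι κ ℤ) :
    Continuous (weightedThetaTerm M τ p) := by
  have : Continuous (thetaWeight (ι := ι) M τ) := by
    unfold thetaWeight
    fun_prop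
  have := continuous_thetaTerm M τ p
  unfold weightedThetaTerm
  fun_prop

lemma norm_weightedThetaTerm {M : Matrix κ κ ℝ} {τ : Matrix ι ι ℂ} (hM : M.PosDef)
    (hτ : (τ.map Complex.im).PosDef) (p : Matrix ι κ ℤ) (z : Matrix ι κ ℂ) :
    ‖weightedThetaTerm M τ p z‖ = Real.exp (-(2 * Real.pi) *
      matrixForm (τ.map Complex.im) M
        ((τ.map Complex.im)⁻¹ * z.map Complex.im + thetaCenter M p)) := by
  have hM' : M.IsSymm := isHermitian_iff_isSymm.mp hM.isHermitian
  have hτ' : (τ.map Complex.im).IsSymm := isHermitian_iff_isSymm.mp hτ.isHermitian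
  rw [thetaCenter, ← trace_add_trace_add_trace_eq_matrixForm hτ' hτ.det_pos.ne'.isUnit hM'
    hM.det_pos.ne'.isUnit, weightedThetaTerm, norm_mul, norm_thetaTerm, Complex.norm_real,
    Real.norm_of_nonneg (Real.sqrt_nonneg _), thetaWeight, ← Real.exp_half, ← Real.exp_add]
  ring_nf

lemma theta_mul_sqrt_thetaWeight {m r : ℕ} (M : Matrix (Fin r) (Fin r) ℝ)
    (R : Matrix (Fin m) (Fin r) ℤ) (τ : Matrix (Fin m) (Fin m) ℂ) (z : Matrix (Fin m) (Fin r) ℂ) :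
    theta M R τ z * √(thetaWeight M τ z) =
      ∑' p : latticeCoset M R, weightedThetaTerm M τ p z := by
  rw [theta_eq_tsum_thetaTerm, ← tsum_mul_right]
  rfl

lemma theta_mul_conj_mul_thetaWeight {m r : ℕ} (M : Matrix (Fin r) (Fin r) ℝ)
    (R R' : Matrix (Fin m) (Fin r) ℤ) (τ : Matrix (Fin m) (Fin m) ℂ)
    (z : Matrix (Fin m) (Fin r) ℂ) :
    theta M R τ z * (starRingEnd ℂ) (theta M R' τ z) * thetaWeight M τ z =
      (∑' p : latticeCoset M R, weightedThetaTerm M τ p z) *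
        (starRingEnd ℂ) (∑' q : latticeCoset M R', weightedThetaTerm M τ q z) := by
  have hsqrt : (thetaWeight M τ z : ℂ) = (√(thetaWeight M τ z) : ℂ) ^ 2 := by
    rw [← Complex.ofReal_pow, Real.sq_sqrt (show 0 ≤ thetaWeight M τ z from (Real.exp_pos _).le)]
  rw [← theta_mul_sqrt_thetaWeight, ← theta_mul_sqrt_thetaWeight, map_mul, Complex.conj_ofReal,
    hsqrt]
  ring

end ThetaTerms

section FundamentalDomain

variable {ι κ : Type*} [Fintype ι]

/-- The point `c + τ a + b`. As `(a, b)` runs through the unit box, it sweeps the translate by `c`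
of a fundamental domain of `ℂ^{m×r}/(τ ℤ^{m×r} + ℤ^{m×r})`. -/
noncomputable def fundamentalPoint (τ : Matrix ι ι ℂ) (c : Matrix ι κ ℂ)
    (ab : (ι → κ → ℝ) × (ι → κ → ℝ)) : Matrix ι κ ℂ :=
  c + (τ * (Matrix.of ab.1).map Complex.ofReal + (Matrix.of ab.2).map Complex.ofReal)

lemma continuous_fundamentalPoint (τ : Matrix ι ι ℂ) (c : Matrix ι κ ℂ) :
    Continuous (fundamentalPoint τ c) := by
  unfold fundamentalPoint
  fun_prop

lemma map_im_fundamentalPoint (τ : Matrix ι ι ℂ) (c : Matrix ι κ ℂ)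
    (ab : (ι → κ → ℝ) × (ι → κ → ℝ)) :
    (fundamentalPoint τ c ab).map Complex.im =
      c.map Complex.im + τ.map Complex.im * Matrix.of ab.1 := by
  ext i j
  simp [fundamentalPoint, Matrix.mul_apply]

variable [Fintype κ] [DecidableEq ι] [DecidableEq κ] {M : Matrix κ κ ℝ} {τ : Matrix ι ι ℂ}

lemma weightedThetaTerm_fundamentalPoint (M : Matrix κ κ ℝ) (τ : Matrix ι ι ℂ) (p : Matrix ι κ ℤ)
    (c : Matrix ι κ ℂ) (a b : ι → κ → ℝ) :
    weightedThetaTerm M τ p (fundamentalPoint τ c (a, b)) =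
      weightedThetaTerm M τ p (fundamentalPoint τ c (a, 0)) * torusChar p b := by
  have hpoint : fundamentalPoint τ c (a, b) =
      fundamentalPoint τ c (a, 0) + (Matrix.of b).map Complex.ofReal := by
    ext i j
    simp [fundamentalPoint, add_assoc]
  have hweight : thetaWeight M τ (fundamentalPoint τ c (a, b)) =
      thetaWeight M τ (fundamentalPoint τ c (a, 0)) := by
    simp only [thetaWeight, map_im_fundamentalPoint]
  rw [weightedThetaTerm, weightedThetaTerm, hweight, hpoint, thetaTerm_add_ofReal, mul_right_comm]

lemma norm_weightedThetaTerm_fundamentalPoint (hM : M.PosDef) (hτ : (τ.map Complex.im).PosDef)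
    (p : Matrix ι κ ℤ) (c : Matrix ι κ ℂ) (ab : (ι → κ → ℝ) × (ι → κ → ℝ)) :
    ‖weightedThetaTerm M τ p (fundamentalPoint τ c ab)‖ = Real.exp (-(2 * Real.pi) *
      matrixForm (τ.map Complex.im) M
        (Matrix.of ab.1 + ((τ.map Complex.im)⁻¹ * c.map Complex.im + thetaCenter M p))) := by
  rw [norm_weightedThetaTerm hM hτ, map_im_fundamentalPoint, Matrix.mul_add,
    nonsing_inv_mul_cancel_left _ _ hτ.det_pos.ne'.isUnit, add_right_comm, add_comm]

lemma exists_summable_norm_weightedThetaTerm_le (hM : M.PosDef)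
    (hint : IsIntegerMatrix ((2 : ℝ) • M)) (hτ : (τ.map Complex.im).PosDef) (R : Matrix ι κ ℤ)
    (c : Matrix ι κ ℂ) :
    ∃ u : latticeCoset M R → ℝ, Summable u ∧
      ∀ p : latticeCoset M R, ∀ ab ∈ Set.Icc (0 : ι → κ → ℝ) 1 ×ˢ Set.Icc (0 : ι → κ → ℝ) 1,
        ‖weightedThetaTerm M τ p (fundamentalPoint τ c ab)‖ ≤ u p := by
  obtain ⟨e, he⟩ := exists_equiv_latticeCoset hM.det_pos.ne'.isUnit hint R
  let shift (a : ι → κ → ℝ) : Matrix ι κ ℝ :=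
    Matrix.of a + ((τ.map Complex.im)⁻¹ * c.map Complex.im + thetaCenter M R)
  have hshift : IsCompact (shift '' Set.Icc 0 1) :=
    isCompact_Icc.image (by fun_prop)
  obtain ⟨u, hu, hle⟩ :=
    exists_summable_exp_neg_matrixForm_le hτ hM Real.two_pi_pos hshift
  refine ⟨u ∘ e.symm, e.symm.summable_iff.mpr hu, fun p ab hab => ?_⟩
  obtain ⟨X, rfl⟩ := e.surjective p
  rw [norm_weightedThetaTerm_fundamentalPoint hM hτ, he, ← add_assoc (_ * _), ← add_assoc]
  simpa only [Function.comp_apply, e.symm_apply_apply] using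
    hle X _ (Set.mem_image_of_mem shift hab.1)

lemma setIntegral_weightedThetaTerm_mul_conj (hM : M.PosDef) (hτ : (τ.map Complex.im).PosDef)
    (p q : Matrix ι κ ℤ) (c : Matrix ι κ ℂ) :
    ∫ ab in Set.Icc (0 : ι → κ → ℝ) 1 ×ˢ Set.Icc (0 : ι → κ → ℝ) 1,
        weightedThetaTerm M τ p (fundamentalPoint τ c ab) *
          (starRingEnd ℂ) (weightedThetaTerm M τ q (fundamentalPoint τ c ab)) =
      if p = q then
        ((∫ a in Set.Icc (0 : ι → κ → ℝ) 1, Real.exp (-(4 * Real.pi) *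
          matrixForm (τ.map Complex.im) M
            (Matrix.of a + ((τ.map Complex.im)⁻¹ * c.map Complex.im + thetaCenter M p))) : ℝ) : ℂ)
      else 0 := by
  let W (p : Matrix ι κ ℤ) (a : ι → κ → ℝ) : ℂ :=
    weightedThetaTerm M τ p (fundamentalPoint τ c (a, 0))
  have hsplit (ab : (ι → κ → ℝ) × (ι → κ → ℝ)) :
      weightedThetaTerm M τ p (fundamentalPoint τ c ab) *
          (starRingEnd ℂ) (weightedThetaTerm M τ q (fundamentalPoint τ c ab)) =
        W p ab.1 * (starRingEnd ℂ) (W q ab.1) * torusChar (p - q) ab.2 := by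
    rw [weightedThetaTerm_fundamentalPoint M τ p, weightedThetaTerm_fundamentalPoint M τ q,
      map_mul, mul_mul_mul_comm, torusChar_mul_conj]
  simp only [hsplit]
  rw [Measure.volume_eq_prod, setIntegral_prod_mul (fun a => W p a * (starRingEnd ℂ) (W q a)),
    integral_torusChar]
  split_ifs with h₁ h₂ h₂
  · rw [mul_one, ← integral_complex_ofReal]
    congr 1 with a
    rw [← h₂, Complex.mul_conj, Complex.normSq_eq_norm_sq,
      norm_weightedThetaTerm_fundamentalPoint hM hτ, ← Real.exp_nat_mul]
    congr 2
    push_cast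
    ring
  · exact absurd (sub_eq_zero.mp h₁) h₂
  · exact absurd (sub_eq_zero.mpr h₂) h₁
  · exact mul_zero _

end FundamentalDomain

lemma hasSum_integral_mul_conj {α β γ : Type*} [MeasurableSpace α] {μ : Measure α}
    [IsFiniteMeasure μ] [Countable β] [Countable γ] {f : β → α → ℂ} {g : γ → α → ℂ} {u : β → ℝ}
    {w : γ → ℝ} (hf : ∀ i, AEStronglyMeasurable (f i) μ) (hg : ∀ j, AEStronglyMeasurable (g j) μ)
    (hu : Summable u) (hw : Summable w) (hfu : ∀ᵐ x ∂μ, ∀ i, ‖f i x‖ ≤ u i)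
    (hgw : ∀ᵐ x ∂μ, ∀ j, ‖g j x‖ ≤ w j) :
    HasSum (fun ij : β × γ => ∫ x, f ij.1 x * (starRingEnd ℂ) (g ij.2 x) ∂μ)
      (∫ x, (∑' i, f i x) * (starRingEnd ℂ) (∑' j, g j x) ∂μ) := by
  let F (ij : β × γ) (x : α) : ℂ := f ij.1 x * (starRingEnd ℂ) (g ij.2 x)
  have hbound : ∀ᵐ x ∂μ, ∀ ij, ‖F ij x‖ ≤ |u ij.1| * |w ij.2| := by
    filter_upwards [hfu, hgw] with x hx hx' ij
    rw [norm_mul, RCLike.norm_conj]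
    exact mul_le_mul ((hx _).trans (le_abs_self _)) ((hx' _).trans (le_abs_self _))
      (norm_nonneg _) (abs_nonneg _)
  have hF (ij) : AEStronglyMeasurable (F ij) μ :=
    (hf ij.1).mul (Complex.continuous_conj.comp_aestronglyMeasurable (hg ij.2))
  have hdom : Summable fun ij : β × γ => |u ij.1| * |w ij.2| :=
    hu.abs.mul_of_nonneg hw.abs (fun _ => abs_nonneg _) fun _ => abs_nonneg _
  refine (hasSum_integral_of_dominated_convergence (fun ij _ => |u ij.1| * |w ij.2|) hF
    (fun ij => hbound.mono fun x hx => hx ij) (.of_forall fun _ => hdom)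
    (integrable_const _) ?_)
  filter_upwards [hfu, hgw] with x hx hx'
  have hfx : Summable fun i => ‖f i x‖ := hu.of_nonneg_of_le (fun _ => norm_nonneg _) hx
  have hgx : Summable fun j => ‖(starRingEnd ℂ) (g j x)‖ :=
    hw.of_nonneg_of_le (fun _ => norm_nonneg _) fun j => by rw [RCLike.norm_conj]; exact hx' j
  rw [Complex.conj_tsum, tsum_mul_tsum_of_summable_norm hfx hgx]
  exact (summable_mul_of_summable_norm hfx hgx).hasSum

section Orthogonality

variable {m r : ℕ} {M : Matrix (Fin r) (Fin r) ℝ} {τ : Matrix (Fin m) (Fin m) ℂ}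

lemma hasSum_setIntegral_weightedThetaTerm_mul_conj (hM : M.PosDef)
    (hint : IsIntegerMatrix ((2 : ℝ) • M)) (hτ : (τ.map Complex.im).PosDef)
    (R R' : Matrix (Fin m) (Fin r) ℤ) (c : Matrix (Fin m) (Fin r) ℂ) :
    HasSum (fun pq : latticeCoset M R × latticeCoset M R' =>
        ∫ ab in Set.Icc (0 : Fin m → Fin r → ℝ) 1 ×ˢ Set.Icc (0 : Fin m → Fin r → ℝ) 1,
          weightedThetaTerm M τ pq.1 (fundamentalPoint τ c ab) *
            (starRingEnd ℂ) (weightedThetaTerm M τ pq.2 (fundamentalPoint τ c ab)))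
      (∫ ab in Set.Icc (0 : Fin m → Fin r → ℝ) 1 ×ˢ Set.Icc (0 : Fin m → Fin r → ℝ) 1,
        theta M R τ (fundamentalPoint τ c ab) *
          (starRingEnd ℂ) (theta M R' τ (fundamentalPoint τ c ab)) *
          thetaWeight M τ (fundamentalPoint τ c ab)) := by
  have : Countable (Matrix (Fin m) (Fin r) ℤ) := inferInstanceAs (Countable (_ → _ → ℤ))
  have : IsFiniteMeasure (volume.restrict
      (Set.Icc (0 : Fin m → Fin r → ℝ) 1 ×ˢ Set.Icc (0 : Fin m → Fin r → ℝ) 1)) := by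
    rw [Measure.volume_eq_prod, ← Measure.prod_restrict, restrict_Icc_eq_pi]
    infer_instance
  have hcont (p : Matrix (Fin m) (Fin r) ℤ) :
      Continuous fun ab => weightedThetaTerm M τ p (fundamentalPoint τ c ab) :=
    (continuous_weightedThetaTerm M τ p).comp (continuous_fundamentalPoint τ c)
  obtain ⟨u, hu, hRu⟩ := exists_summable_norm_weightedThetaTerm_le hM hint hτ R c
  obtain ⟨w, hw, hR'w⟩ := exists_summable_norm_weightedThetaTerm_le hM hint hτ R' c
  have hbox : MeasurableSet
      (Set.Icc (0 : Fin m → Fin r → ℝ) 1 ×ˢ Set.Icc (0 : Fin m → Fin r → ℝ) 1) :=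
    measurableSet_Icc.prod measurableSet_Icc
  simp only [theta_mul_conj_mul_thetaWeight]
  exact hasSum_integral_mul_conj
    (f := fun (p : latticeCoset M R) ab => weightedThetaTerm M τ p (fundamentalPoint τ c ab))
    (g := fun (q : latticeCoset M R') ab => weightedThetaTerm M τ q (fundamentalPoint τ c ab))
    (fun p => (hcont p).aestronglyMeasurable) (fun q => (hcont q).aestronglyMeasurable) hu hw
    (ae_restrict_of_forall_mem hbox fun ab hab p => hRu p ab hab)
    (ae_restrict_of_forall_mem hbox fun ab hab q => hR'w q ab hab)

lemma setIntegral_theta_mul_conj_mul_thetaWeight (hM : M.PosDef)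
    (hint : IsIntegerMatrix ((2 : ℝ) • M)) (hτ : (τ.map Complex.im).PosDef)
    (R R' : Matrix (Fin m) (Fin r) ℤ) (c : Matrix (Fin m) (Fin r) ℂ) :
    ∫ ab in Set.Icc (0 : Fin m → Fin r → ℝ) 1 ×ˢ Set.Icc (0 : Fin m → Fin r → ℝ) 1,
        theta M R τ (fundamentalPoint τ c ab) *
          (starRingEnd ℂ) (theta M R' τ (fundamentalPoint τ c ab)) *
          thetaWeight M τ (fundamentalPoint τ c ab) =
      if R ∈ latticeCoset M R' then
        ((∫ x : Fin m → Fin r → ℝ,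
          Real.exp (-(4 * Real.pi) * matrixForm (τ.map Complex.im) M (Matrix.of x)) : ℝ) : ℂ)
      else 0 := by
  rw [← (hasSum_setIntegral_weightedThetaTerm_mul_conj hM hint hτ R R' c).tsum_eq]
  simp only [setIntegral_weightedThetaTerm_mul_conj hM hτ]
  rw [tsum_prod_ite_eq (latticeCoset M R) (latticeCoset M R') fun p =>
    ((∫ a in Set.Icc (0 : Fin m → Fin r → ℝ) 1, Real.exp (-(4 * Real.pi) *
      matrixForm (τ.map Complex.im) M
        (Matrix.of a + ((τ.map Complex.im)⁻¹ * c.map Complex.im + thetaCenter M p))) : ℝ) : ℂ)]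
  split_ifs with h
  · rw [latticeCoset_eq_of_mem h, Set.inter_self, ← Complex.ofReal_tsum,
      ← (hasSum_setIntegral_Icc_add_thetaCenter hM.det_pos.ne'.isUnit hint R'
        (integrable_exp_neg_mul_matrixForm hτ hM (by positivity : 0 < 4 * Real.pi))
        ((τ.map Complex.im)⁻¹ * c.map Complex.im)).tsum_eq]
    rfl
  · rw [latticeCoset_inter_eq_empty h]
    exact tsum_empty

theorem thetaShift_orthogonality_general (hM : M.PosDef) (hint : IsIntegerMatrix ((2 : ℝ) • M))
    (hτ : (τ.map Complex.im).PosDef) (R R' : Matrix (Fin m) (Fin r) ℤ)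
    (c : Matrix (Fin m) (Fin r) ℂ) :
    ∫ ab in Set.Icc (0 : Fin m → Fin r → ℝ) 1 ×ˢ Set.Icc (0 : Fin m → Fin r → ℝ) 1,
        theta M R τ (fundamentalPoint τ c ab) *
          (starRingEnd ℂ) (theta M R' τ (fundamentalPoint τ c ab)) *
          Complex.ofReal (thetaWeight M τ (fundamentalPoint τ c ab) *
            (τ.map Complex.im).det ^ r) =
      if R ∈ latticeCoset M R' then
        Complex.ofReal ((τ.map Complex.im).det ^ ((r : ℝ) / 2) *
          ((4 : ℝ) • M).det ^ (-((m : ℝ) / 2)))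
      else 0 := by
  have hgauss := integral_exp_neg_four_pi_mul_matrixForm hτ hM
  simp only [Fintype.card_fin] at hgauss
  simp only [Complex.ofReal_mul (thetaWeight _ _ _), ← mul_assoc]
  rw [integral_mul_const, setIntegral_theta_mul_conj_mul_thetaWeight hM hint hτ, ite_mul, zero_mul,
    ← Complex.ofReal_mul, hgauss]

end Orthogonality

lemma map_im_half_smul_mul {ι κ σ : Type*} [Fintype κ] [Fintype σ] (z : Matrix ι σ ℂ)
    (R : Matrix σ κ ℤ) (N : Matrix κ κ ℝ) :
    ((1 / 2 : ℂ) • (z * (R.map fun n : ℤ => (n : ℂ)) * N.map Complex.ofReal)).map Complex.im =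
      (1 / 2 : ℝ) • (z.map Complex.im * R.map (Int.cast : ℤ → ℝ) * N) := by
  have hhalf : (1 / 2 : ℂ) = ((1 / 2 : ℝ) : ℂ) := by norm_num
  ext i j
  rw [hhalf]
  simp [Matrix.mul_apply, -one_div]

/-- the orthogonality relation (Lemma 4.2) for the shifted theta
series: integrating `ϑ_{M,R₂,R₁} · conj(ϑ_{M,R₂,R₁'})` against the exponential factor
over the fundamental domain `z'₂ = τ₁a + b`, `(a,b) ∈ [0,1]^{m×r} × [0,1]^{m×r}`
(with Jacobian `det(v₁)^r`) gives `δ_{R₁,R₁' mod 2M} · det(v₁)^{r/2} · det(4M)^{-m/2}`. -/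
theorem thetaShift_orthogonality {m t r : ℕ} (hm : 1 ≤ m) (ht : 1 ≤ t) (hr : 1 ≤ r)
    (M : Matrix (Fin r) (Fin r) ℝ) (hM : LPlus M)
    (R₂ : Matrix (Fin t) (Fin r) ℤ) (R₁ R₁' : Matrix (Fin m) (Fin r) ℤ)
    (τ₁ : Matrix (Fin m) (Fin m) ℂ) (hτ : τ₁.IsSymm)
    (z'₁ : Matrix (Fin m) (Fin t) ℂ)
    (v₁ : Matrix (Fin m) (Fin m) ℝ) (hv₁ : v₁ = τ₁.map Complex.im) (hv₁pos : v₁.PosDef)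
    (y'₁ : Matrix (Fin m) (Fin t) ℝ) (hy'₁ : y'₁ = z'₁.map Complex.im) :
    (∫ ab : (Fin m → Fin r → ℝ) × (Fin m → Fin r → ℝ) in
        (Set.pi Set.univ fun _ : Fin m => Set.pi Set.univ fun _ : Fin r =>
          Set.Icc (0 : ℝ) 1) ×ˢ
        (Set.pi Set.univ fun _ : Fin m => Set.pi Set.univ fun _ : Fin r =>
          Set.Icc (0 : ℝ) 1),
        thetaShift M R₂ R₁ τ₁ z'₁
            (τ₁ * (Matrix.of ab.1).map Complex.ofReal + (Matrix.of ab.2).map Complex.ofReal) *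
          (starRingEnd ℂ) (thetaShift M R₂ R₁' τ₁ z'₁
            (τ₁ * (Matrix.of ab.1).map Complex.ofReal + (Matrix.of ab.2).map Complex.ofReal)) *
          Complex.ofReal
            (Real.exp (-4 * Real.pi *
                Matrix.trace (M *
                  ((1/2 : ℝ) • (y'₁ * R₂.map (Int.cast : ℤ → ℝ) * M⁻¹) +
                    v₁ * Matrix.of ab.1)ᵀ * v₁⁻¹ *
                  ((1/2 : ℝ) • (y'₁ * R₂.map (Int.cast : ℤ → ℝ) * M⁻¹) +
                    v₁ * Matrix.of ab.1))) *
              v₁.det ^ r)) =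
      if ∃ X : Matrix (Fin m) (Fin r) ℤ,
          (R₁ - R₁').map (Int.cast : ℤ → ℝ) = X.map (Int.cast : ℤ → ℝ) * ((2 : ℝ) • M) then
        Complex.ofReal (v₁.det ^ ((r : ℝ) / 2) * ((4 : ℝ) • M).det ^ (-((m : ℝ) / 2)))
      else 0 := by
  subst hv₁ hy'₁
  have key := thetaShift_orthogonality_general hM.2.1 hM.2.2.2 hv₁pos R₁ R₁'
    ((1 / 2 : ℂ) • (z'₁ * (R₂.map fun n : ℤ => (n : ℂ)) * M⁻¹.map Complex.ofReal))
  simp only [thetaWeight, map_im_fundamentalPoint, map_im_half_smul_mul] at key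
  simp only [Set.pi_univ_Icc]
  exact key
end

section
/- Let t ≥ 1, r ≥ 1 and M ∈ L_r^+, and let l be the smallest positive integer such that 2l·(2M)⁻¹ has integer entries. Fix T ∈ L_t^+. Let S be a subset of L_{t,r}^+(M) such that (i) distinct elements of S lie in distinct B_{t,r}(ℤ)-orbits, and (ii) every N = [[N₂, (1/2)R₂],[(1/2)R₂ᵀ, M]] ∈ S satisfies γ₁·(4l·N₂ - l·R₂M⁻¹R₂ᵀ)·γ₁ᵀ = T for some γ₁ ∈ GL_t(ℤ). Then S is finite and has at most det(2M)^{t} elements. -/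
open Matrix

/-- Membership in `L_{t,r}^+(M)`: positive definite half-integral matrices of the
block form `[[N₂, (1/2)R₂],[(1/2)R₂ᵀ, M]]` with `N₂ ∈ L_t^+` and `R₂` integral. -/
def LtrPlus (t r : ℕ) (M : Matrix (Fin r) (Fin r) ℝ) :
    Set (Matrix (Fin t ⊕ Fin r) (Fin t ⊕ Fin r) ℝ) :=
  {N | ∃ N₂ : Matrix (Fin t) (Fin t) ℝ, ∃ R₂ : Matrix (Fin t) (Fin r) ℝ,
    LPlus N₂ ∧ IsIntegerMatrix R₂ ∧
    N = Matrix.fromBlocks N₂ ((1/2 : ℝ) • R₂) ((1/2 : ℝ) • R₂ᵀ) M ∧ LPlus N}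

/-- Membership in `B_{t,r}(ℤ)` (viewed inside real matrices): `γ = [[γ₁,γ₂],[0,1]]`
with `γ₁ ∈ GL_t(ℤ)` and `γ₂` an integer matrix. -/
def InBtr (t r : ℕ) (γ : Matrix (Fin t ⊕ Fin r) (Fin t ⊕ Fin r) ℝ) : Prop :=
  ∃ γ₁ : Matrix (Fin t) (Fin t) ℝ, ∃ γ₂ : Matrix (Fin t) (Fin r) ℝ,
    IsIntegerMatrix γ₁ ∧ (γ₁.det = 1 ∨ γ₁.det = -1) ∧ IsIntegerMatrix γ₂ ∧
    γ = Matrix.fromBlocks γ₁ γ₂ (0 : Matrix (Fin r) (Fin t) ℝ) (1 : Matrix (Fin r) (Fin r) ℝ)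

/-!
For `N = [[N₂, R₂/2], [R₂ᵀ/2, M]]` the matrix `4lN₂ - lR₂M⁻¹R₂ᵀ` is `4l` times the Schur complement
of `M` in `N`. Congruence by `[[γ₁, γ₂], [0, 1]]` fixes `M`, turns `R₂` into `γ₁R₂ + γ₂(2M)`, and
acts on the Schur complement through `γ₁` alone; moreover `N` is determined by `R₂`, `M` and its
Schur complement. Hence, if `g_N ∈ GL_t(ℤ)` moves the value at `N` to `T`, the orbit of `N` within
the fibre over `T` is determined by the residue of `g_N R₂` modulo left multiples of `2M`. Each of
its `t` rows lies in `ℤ^r` modulo the row lattice of `2M`, a group of order `det (2M)`.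
-/

section SchurComplement

variable {m n R : Type*}

theorem toBlocks₂₁_eq_transpose_of_isSymm {N : Matrix (m ⊕ n) (m ⊕ n) R} (hN : N.IsSymm) :
    N.toBlocks₂₁ = N.toBlocks₁₂ᵀ :=
  Matrix.ext fun i j => (hN.apply (.inr i) (.inl j)).symm

variable [Fintype n] [DecidableEq n] [CommRing R]

/-- The Schur complement `N₁₁ - N₁₂ N₂₂⁻¹ N₂₁` of the lower right block of `N`. It is meaningful
only when `N₂₂` is invertible. -/
noncomputable def schurComplement (N : Matrix (m ⊕ n) (m ⊕ n) R) : Matrix m m R :=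
  N.toBlocks₁₁ - N.toBlocks₁₂ * N.toBlocks₂₂⁻¹ * N.toBlocks₂₁

theorem smul_schurComplement_of_isSymm {N : Matrix (m ⊕ n) (m ⊕ n) R} (hN : N.IsSymm) (c : R) :
    (4 * c) • N.toBlocks₁₁ -
        c • (((2 : R) • N.toBlocks₁₂) * N.toBlocks₂₂⁻¹ * ((2 : R) • N.toBlocks₁₂)ᵀ) =
      (4 * c) • schurComplement N := by
  rw [schurComplement, toBlocks₂₁_eq_transpose_of_isSymm hN]
  simp only [transpose_smul, Matrix.smul_mul, Matrix.mul_smul, smul_smul, smul_sub]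
  ring_nf

theorem eq_of_isSymm_of_schurComplement_eq {N N' : Matrix (m ⊕ n) (m ⊕ n) R}
    (hN : N.IsSymm) (hN' : N'.IsSymm) (h₁₂ : N.toBlocks₁₂ = N'.toBlocks₁₂)
    (h₂₂ : N.toBlocks₂₂ = N'.toBlocks₂₂) (hschur : schurComplement N = schurComplement N') :
    N = N' := by
  have h₂₁ : N.toBlocks₂₁ = N'.toBlocks₂₁ := by
    rw [toBlocks₂₁_eq_transpose_of_isSymm hN, toBlocks₂₁_eq_transpose_of_isSymm hN', h₁₂]
  have h₁₁ : N.toBlocks₁₁ = N'.toBlocks₁₁ := by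
    simpa only [schurComplement, h₁₂, h₂₁, h₂₂, sub_left_inj] using hschur
  exact ext_iff_blocks.mpr ⟨h₁₁, h₁₂, h₂₁, h₂₂⟩

variable [Fintype m]

theorem fromBlocks_mul_mul_transpose (P : Matrix m m R) (X : Matrix m n R)
    (N : Matrix (m ⊕ n) (m ⊕ n) R) :
    fromBlocks P X 0 (1 : Matrix n n R) * N * (fromBlocks P X 0 (1 : Matrix n n R))ᵀ =
      fromBlocks
        ((P * N.toBlocks₁₁ + X * N.toBlocks₂₁) * Pᵀ + (P * N.toBlocks₁₂ + X * N.toBlocks₂₂) * Xᵀ)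
        (P * N.toBlocks₁₂ + X * N.toBlocks₂₂)
        (N.toBlocks₂₁ * Pᵀ + N.toBlocks₂₂ * Xᵀ)
        N.toBlocks₂₂ := by
  conv_lhs => rw [← fromBlocks_toBlocks N]
  simp only [fromBlocks_transpose, fromBlocks_multiply, transpose_zero, transpose_one,
    Matrix.zero_mul, Matrix.mul_zero, Matrix.one_mul, Matrix.mul_one, zero_add]

theorem schurComplement_fromBlocks_mul_mul_transpose (P : Matrix m m R) (X : Matrix m n R)
    {N : Matrix (m ⊕ n) (m ⊕ n) R} (hN : IsUnit N.toBlocks₂₂.det) :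
    schurComplement
        (fromBlocks P X 0 (1 : Matrix n n R) * N * (fromBlocks P X 0 (1 : Matrix n n R))ᵀ) =
      P * schurComplement N * Pᵀ := by
  rw [fromBlocks_mul_mul_transpose]
  simp only [schurComplement, toBlocks_fromBlocks₁₁, toBlocks_fromBlocks₁₂,
    toBlocks_fromBlocks₂₁, toBlocks_fromBlocks₂₂, Matrix.add_mul, Matrix.mul_add, Matrix.mul_sub,
    Matrix.sub_mul, Matrix.mul_assoc, mul_nonsing_inv_cancel_left _ _ hN,
    nonsing_inv_mul_cancel_left _ _ hN]
  abel

end SchurComplement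

namespace IsIntegerMatrix

variable {ι κ μ : Type*}

theorem exists_map_eq {A : Matrix ι κ ℝ} (hA : IsIntegerMatrix A) :
    ∃ Z : Matrix ι κ ℤ, Z.map (Int.castRingHom ℝ) = A := by
  choose Z hZ using hA
  exact ⟨of Z, Matrix.ext fun i j => (hZ i j).symm⟩

theorem map_castRingHom (Z : Matrix ι κ ℤ) : IsIntegerMatrix (Z.map (Int.castRingHom ℝ)) :=
  fun i j => ⟨Z i j, rfl⟩

theorem mul [Fintype κ] {A : Matrix ι κ ℝ} {B : Matrix κ μ ℝ} (hA : IsIntegerMatrix A)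
    (hB : IsIntegerMatrix B) : IsIntegerMatrix (A * B) := by
  obtain ⟨Y, rfl⟩ := hA.exists_map_eq
  obtain ⟨Z, rfl⟩ := hB.exists_map_eq
  rw [← Matrix.map_mul]
  exact map_castRingHom (Y * Z)

theorem neg {A : Matrix ι κ ℝ} (hA : IsIntegerMatrix A) : IsIntegerMatrix (-A) := by
  obtain ⟨Z, rfl⟩ := hA.exists_map_eq
  exact Matrix.map_neg (Int.castRingHom ℝ) (map_neg _) Z ▸ map_castRingHom (-Z)

theorem adjugate [Fintype ι] [DecidableEq ι] {A : Matrix ι ι ℝ} (hA : IsIntegerMatrix A) :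
    IsIntegerMatrix A.adjugate := by
  obtain ⟨Z, rfl⟩ := hA.exists_map_eq
  exact (Int.castRingHom ℝ).map_adjugate Z ▸ map_castRingHom Z.adjugate

end IsIntegerMatrix

/-- A real matrix lying in the image of `GL(ℤ)`: integer entries and determinant `±1`. -/
def IsUnimodular {ι : Type*} [Fintype ι] [DecidableEq ι] (g : Matrix ι ι ℝ) : Prop :=
  IsIntegerMatrix g ∧ (g.det = 1 ∨ g.det = -1)

namespace IsUnimodular

variable {ι : Type*} [Fintype ι] [DecidableEq ι] {g h : Matrix ι ι ℝ}

theorem isUnit_det (hg : IsUnimodular g) : IsUnit g.det := by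
  rcases hg.2 with hdet | hdet <;> simp [hdet]

theorem mul (hg : IsUnimodular g) (hh : IsUnimodular h) : IsUnimodular (g * h) := by
  refine ⟨hg.1.mul hh.1, ?_⟩
  rcases hg.2 with hdet | hdet <;> rcases hh.2 with hdet' | hdet' <;> simp [hdet, hdet']

theorem inv (hg : IsUnimodular g) : IsUnimodular g⁻¹ := by
  obtain ⟨hint, hdet | hdet⟩ := hg
  · have hinv : g⁻¹ = g.adjugate := by simp [inv_def, hdet]
    exact ⟨hinv ▸ hint.adjugate, .inl (by simp [det_nonsing_inv, hdet])⟩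
  · have hinv : g⁻¹ = -g.adjugate := by simp [inv_def, hdet]
    exact ⟨hinv ▸ hint.adjugate.neg, .inr (by simp [det_nonsing_inv, hdet])⟩

end IsUnimodular

theorem exists_inBtr_mul_mul_transpose_eq {t r : ℕ}
    {N N' : Matrix (Fin t ⊕ Fin r) (Fin t ⊕ Fin r) ℝ} (hN : N.IsSymm) (hN' : N'.IsSymm)
    (hdet : IsUnit N.toBlocks₂₂.det) (h₂₂ : N'.toBlocks₂₂ = N.toBlocks₂₂)
    {g g' : Matrix (Fin t) (Fin t) ℝ} (hg : IsUnimodular g) (hg' : IsUnimodular g')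
    {X : Matrix (Fin t) (Fin r) ℝ} (hX : IsIntegerMatrix X)
    (h₁₂ : g' * N'.toBlocks₁₂ = g * N.toBlocks₁₂ + X * N.toBlocks₂₂)
    (hschur : g * schurComplement N * gᵀ = g' * schurComplement N' * g'ᵀ) :
    ∃ γ, InBtr t r γ ∧ γ * N * γᵀ = N' := by
  set γ : Matrix (Fin t ⊕ Fin r) (Fin t ⊕ Fin r) ℝ :=
    fromBlocks (g'⁻¹ * g) (g'⁻¹ * X) 0 1 with hγ
  have hγ_mem : InBtr t r γ :=
    ⟨g'⁻¹ * g, g'⁻¹ * X, (hg'.inv.mul hg).1, (hg'.inv.mul hg).2, hg'.inv.1.mul hX, rfl⟩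
  have hγ_symm : (γ * N * γᵀ).IsSymm := by
    simp only [IsSymm, transpose_mul, transpose_transpose, hN.eq, Matrix.mul_assoc]
  have hγ_inv (Y : Matrix (Fin t) (Fin t) ℝ) : Y * g'ᵀ * (g'⁻¹)ᵀ = Y := by
    rw [transpose_nonsing_inv,
      mul_nonsing_inv_cancel_right _ _ (isUnit_det_transpose _ hg'.isUnit_det)]
  refine ⟨γ, hγ_mem, eq_of_isSymm_of_schurComplement_eq hγ_symm hN' ?_ ?_ ?_⟩
  · calc (γ * N * γᵀ).toBlocks₁₂
        = g'⁻¹ * (g * N.toBlocks₁₂ + X * N.toBlocks₂₂) := by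
          rw [hγ, fromBlocks_mul_mul_transpose, toBlocks_fromBlocks₁₂, Matrix.mul_add,
            Matrix.mul_assoc, Matrix.mul_assoc]
      _ = N'.toBlocks₁₂ := by rw [← h₁₂, nonsing_inv_mul_cancel_left _ _ hg'.isUnit_det]
  · rw [hγ, fromBlocks_mul_mul_transpose, toBlocks_fromBlocks₂₂, h₂₂]
  · calc schurComplement (γ * N * γᵀ)
        = g'⁻¹ * (g * schurComplement N * gᵀ) * (g'⁻¹)ᵀ := by
          rw [hγ, schurComplement_fromBlocks_mul_mul_transpose _ _ hdet, transpose_mul]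
          simp only [Matrix.mul_assoc]
      _ = schurComplement N' := by
          rw [hschur, ← Matrix.mul_assoc, hγ_inv, nonsing_inv_mul_cancel_left _ _ hg'.isUnit_det]

section RowResidue

variable {α m n : Type*} [Fintype n]

/-- The residue of an integer matrix modulo left multiples of `A`, recorded row by row: each row
is taken modulo the lattice spanned by the rows of `A`. -/
def rowResidue (A : Matrix n n ℤ) (Y : Matrix m n ℤ) :
    m → (n → ℤ) ⧸ LinearMap.range A.vecMulLinear :=
  fun i => Submodule.Quotient.mk (Y i)

theorem rowResidue_eq_iff {A : Matrix n n ℤ} {Y Z : Matrix m n ℤ} :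
    rowResidue A Y = rowResidue A Z ↔ ∃ X : Matrix m n ℤ, Y = Z + X * A := by
  simp only [rowResidue, funext_iff, Submodule.Quotient.eq, LinearMap.mem_range,
    vecMulLinear_apply]
  refine Classical.skolem.trans (exists_congr fun X => ?_)
  rw [← sub_eq_iff_eq_add', eq_comm]
  exact Matrix.ext_iff

variable [DecidableEq n]

theorem card_quotient_range_vecMulLinear {A : Matrix n n ℤ} (hA : A.det ≠ 0) :
    Nat.card ((n → ℤ) ⧸ LinearMap.range A.vecMulLinear) = A.det.natAbs := by
  have hinj : Function.Injective A.vecMulLinear :=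
    vecMul_injective_iff.mpr (linearIndependent_rows_of_det_ne_zero hA)
  rw [← Submodule.natAbs_det_equiv _ (LinearEquiv.ofInjective _ hinj), ← det_transpose,
    ← LinearMap.det_toLin', toLin'_apply', mulVecLin_transpose]
  rfl

theorem finite_and_ncard_le_natAbs_det_pow [Fintype m] {A : Matrix n n ℤ} (hA : A.det ≠ 0)
    {S : Set α} {F : α → Matrix m n ℤ} (hF : S.InjOn (rowResidue A ∘ F)) :
    S.Finite ∧ S.ncard ≤ A.det.natAbs ^ Fintype.card m := by
  have hcard := card_quotient_range_vecMulLinear hA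
  have : Finite ((n → ℤ) ⧸ LinearMap.range A.vecMulLinear) :=
    Nat.finite_of_card_ne_zero (hcard ▸ Int.natAbs_ne_zero.mpr hA)
  refine ⟨.of_finite_image (Set.toFinite _) hF, ?_⟩
  calc S.ncard = (rowResidue A ∘ F '' S).ncard := hF.ncard_image.symm
    _ ≤ Nat.card (m → (n → ℤ) ⧸ LinearMap.range A.vecMulLinear) := Set.ncard_le_card _
    _ = A.det.natAbs ^ Fintype.card m := by rw [Nat.card_fun, hcard, Nat.card_eq_fintype_card]

theorem finite_and_ncard_le_abs_det_pow [Fintype m] {A : Matrix n n ℝ} (hA : IsIntegerMatrix A)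
    (hdet : A.det ≠ 0) {S : Set α} {f : α → Matrix m n ℝ}
    (hf : ∀ x ∈ S, IsIntegerMatrix (f x))
    (hinj : ∀ x ∈ S, ∀ y ∈ S, ∀ X : Matrix m n ℝ, IsIntegerMatrix X → f y = f x + X * A → x = y) :
    S.Finite ∧ (S.ncard : ℝ) ≤ |A.det| ^ Fintype.card m := by
  obtain ⟨A, rfl⟩ := hA.exists_map_eq
  choose! F hF using fun x hx => (hf x hx).exists_map_eq
  have hdet_map : (A.map (Int.castRingHom ℝ)).det = (A.det : ℝ) :=
    ((Int.castRingHom ℝ).map_det A).symm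
  rw [hdet_map] at hdet ⊢
  have hF_inj : S.InjOn (rowResidue A ∘ F) := by
    intro x hx y hy hxy
    obtain ⟨X, hX⟩ := rowResidue_eq_iff.mp hxy.symm
    refine hinj x hx y hy _ (.map_castRingHom X) ?_
    rw [← hF x hx, ← hF y hy, hX, Matrix.map_add _ (map_add _), Matrix.map_mul]
  obtain ⟨hfin, hle⟩ := finite_and_ncard_le_natAbs_det_pow (Int.cast_ne_zero.mp hdet) hF_inj
  refine ⟨hfin, ?_⟩
  rw [← Int.cast_abs, Int.abs_eq_natAbs, Int.cast_natCast]
  exact_mod_cast hle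

end RowResidue

theorem isSymm_and_blocks_of_mem_LtrPlus {t r : ℕ} {M : Matrix (Fin r) (Fin r) ℝ}
    {N : Matrix (Fin t ⊕ Fin r) (Fin t ⊕ Fin r) ℝ} (hN : N ∈ LtrPlus t r M) :
    N.IsSymm ∧ IsIntegerMatrix ((2 : ℝ) • N.toBlocks₁₂) ∧ N.toBlocks₂₂ = M := by
  obtain ⟨N₂, R₂, -, hR₂, rfl, hsymm, -⟩ := hN
  exact ⟨hsymm, by simpa [smul_smul] using hR₂, toBlocks_fromBlocks₂₂ _ _ _ _⟩

theorem fiber_count_le_det_pow_general {t r : ℕ} {M : Matrix (Fin r) (Fin r) ℝ}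
    (hM : IsIntegerMatrix ((2 : ℝ) • M)) (hdet : M.det ≠ 0) {c : ℝ} (hc : c ≠ 0)
    {T : Matrix (Fin t) (Fin t) ℝ} {S : Set (Matrix (Fin t ⊕ Fin r) (Fin t ⊕ Fin r) ℝ)}
    (hS : ∀ N ∈ S, N.IsSymm ∧ IsIntegerMatrix ((2 : ℝ) • N.toBlocks₁₂) ∧ N.toBlocks₂₂ = M)
    (horb : ∀ N ∈ S, ∀ N' ∈ S, N ≠ N' → ∀ γ, InBtr t r γ → γ * N * γᵀ ≠ N')
    (hfib : ∀ N ∈ S, ∃ γ₁ : Matrix (Fin t) (Fin t) ℝ,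
      IsIntegerMatrix γ₁ ∧ (γ₁.det = 1 ∨ γ₁.det = -1) ∧
      γ₁ * ((4 * c) • N.toBlocks₁₁ -
          c • (((2 : ℝ) • N.toBlocks₁₂) * M⁻¹ * ((2 : ℝ) • N.toBlocks₁₂)ᵀ)) * γ₁ᵀ = T) :
    S.Finite ∧ (S.ncard : ℝ) ≤ |((2 : ℝ) • M).det| ^ t := by
  choose hsymm hint h₂₂ using hS
  choose! g hg_int hg_det hgT using hfib
  have hg (N) (hN : N ∈ S) : IsUnimodular (g N) := ⟨hg_int N hN, hg_det N hN⟩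
  have hschur (N) (hN : N ∈ S) : (4 * c) • (g N * schurComplement N * (g N)ᵀ) = T := by
    rw [← hgT N hN, ← h₂₂ N hN, smul_schurComplement_of_isSymm (hsymm N hN), Matrix.mul_smul,
      Matrix.smul_mul]
  have hdet₂ : ((2 : ℝ) • M).det ≠ 0 := by
    rw [det_smul]
    positivity
  have hinj (N) (hN : N ∈ S) (N') (hN' : N' ∈ S) (X : Matrix (Fin t) (Fin r) ℝ)
      (hX : IsIntegerMatrix X)
      (h : g N' * ((2 : ℝ) • N'.toBlocks₁₂) = g N * ((2 : ℝ) • N.toBlocks₁₂) + X * ((2 : ℝ) • M)) :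
      N = N' := by
    by_contra hne
    have h₁₂ : g N' * N'.toBlocks₁₂ = g N * N.toBlocks₁₂ + X * N.toBlocks₂₂ := by
      simp only [Matrix.mul_smul, ← smul_add] at h
      exact h₂₂ N hN ▸ smul_right_injective _ two_ne_zero h
    have hschur_eq : g N * schurComplement N * (g N)ᵀ = g N' * schurComplement N' * (g N')ᵀ :=
      smul_right_injective _ (mul_ne_zero four_ne_zero hc)
        ((hschur N hN).trans (hschur N' hN').symm)
    obtain ⟨γ, hγ, hγN⟩ := exists_inBtr_mul_mul_transpose_eq (hsymm N hN) (hsymm N' hN')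
      (h₂₂ N hN ▸ hdet.isUnit) ((h₂₂ N' hN').trans (h₂₂ N hN).symm) (hg N hN) (hg N' hN') hX
      h₁₂ hschur_eq
    exact horb N hN N' hN' hne γ hγ hγN
  simpa only [Fintype.card_fin] using
    finite_and_ncard_le_abs_det_pow hM hdet₂ (fun N hN => (hg_int N hN).mul (hint N hN)) hinj

/-- fiber counting in the proof of Lemma 2.2: at most `det(2M)^t`
`B_{t,r}(ℤ)`-orbits of `L_{t,r}^+(M)` map to a given `GL_t(ℤ)`-class `T` under
`N ↦ 4lN₂ - lR₂M⁻¹R₂ᵀ`, where `l` is the smallest positive integer with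
`2l(2M)⁻¹` integral. -/
theorem fiber_count_le_det_pow {t r : ℕ} (ht : 1 ≤ t) (hr : 1 ≤ r)
    (M : Matrix (Fin r) (Fin r) ℝ) (hM : LPlus M)
    (l : ℕ) (hl : 0 < l)
    (hlint : IsIntegerMatrix ((2 * (l : ℝ)) • ((2 : ℝ) • M)⁻¹))
    (hlmin : ∀ l' : ℕ, 0 < l' →
      IsIntegerMatrix ((2 * (l' : ℝ)) • ((2 : ℝ) • M)⁻¹) → l ≤ l')
    (T : Matrix (Fin t) (Fin t) ℝ) (hT : LPlus T)
    (S : Set (Matrix (Fin t ⊕ Fin r) (Fin t ⊕ Fin r) ℝ))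
    (hS : S ⊆ LtrPlus t r M)
    (horb : ∀ N ∈ S, ∀ N' ∈ S, N ≠ N' → ∀ γ, InBtr t r γ → γ * N * γᵀ ≠ N')
    (hfib : ∀ N ∈ S, ∃ γ₁ : Matrix (Fin t) (Fin t) ℝ,
      IsIntegerMatrix γ₁ ∧ (γ₁.det = 1 ∨ γ₁.det = -1) ∧
      γ₁ * ((4 * (l : ℝ)) • N.toBlocks₁₁ -
          (l : ℝ) • (((2 : ℝ) • N.toBlocks₁₂) * M⁻¹ * ((2 : ℝ) • N.toBlocks₁₂)ᵀ)) * γ₁ᵀ = T) :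
    S.Finite ∧ (S.ncard : ℝ) ≤ ((2 : ℝ) • M).det ^ t := by
  have hdet : 0 < ((2 : ℝ) • M).det := (hM.2.1.smul (two_pos : (0 : ℝ) < 2)).det_pos
  simpa only [abs_of_pos hdet] using
    fiber_count_le_det_pow_general hM.2.2.2 hM.2.1.det_pos.ne' (Nat.cast_ne_zero.mpr hl.ne')
      (fun _ hN => isSymm_and_blocks_of_mem_LtrPlus (hS hN)) horb hfib
end
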